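/- arXiv:2602.01440 — 3 statements merged into one kernel-verified Lean document; each statement's English description precedes it below -/
import Mathlib

section
/- Let R = k[[x,y,z]] over a field k, and let L be the cokernel of the map R² → R² given by the matrix [[z, y + Σ_{i≥1} x^{4i−2}], [y + Σ_{i≥1} x^{4i}, z]]. Then the two-term complex 0 → R² → R² → 0 given by this matrix is exact in positive degrees (i.e., the matrix is injective), L has depth 2, and L ⊗_R R/(x²,y²) is isomorphic to the R/(x²,y²)-module presented by the matrix [[z, y],[y, z]]. -/
open scoped Classical

/-- The depth of a module over a local ring: the supremum of lengths of `M`-regular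
sequences contained in the maximal ideal. -/
noncomputable def depth (R : Type*) [CommRing R] [IsLocalRing R] (M : Type*)
    [AddCommGroup M] [Module R M] : ℕ∞ :=
  sSup {n : ℕ∞ | ∃ rs : List R, (rs.length : ℕ∞) = n ∧
    (∀ r ∈ rs, r ∈ IsLocalRing.maximalIdeal R) ∧ RingTheory.Sequence.IsRegular M rs}

/-- The power series `∑_{i ∈ S} x₀^i` in `k[[x₀, x₁, x₂]]`. -/
noncomputable def xSeries (k : Type*) [Field k] (S : Set ℕ) : MvPowerSeries (Fin 3) k :=
  show ((Fin 3) →₀ ℕ) → k from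
    fun e => if ∃ i ∈ S, e = Finsupp.single (0 : Fin 3) i then 1 else 0

open scoped Matrix

namespace MvPowerSeries

variable {σ k : Type*} [Field k]

/-- A power series splits as a part not involving `X s` plus a multiple of `X s`. -/
theorem exists_eq_add_X_mul (s : σ) (f : MvPowerSeries σ k) :
    ∃ f₀ q : MvPowerSeries σ k, f = f₀ + X s * q ∧
      ∀ m, coeff m f₀ = if m s = 0 then coeff m f else 0 := by
  let f₀ : MvPowerSeries σ k := fun m => if m s = 0 then coeff m f else 0
  have hf₀ : ∀ m, coeff m f₀ = if m s = 0 then coeff m f else 0 := fun _ => rfl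
  obtain ⟨q, hq⟩ : X s ∣ f - f₀ := by
    rw [X_dvd_iff]
    intro m hm
    rw [map_sub, hf₀, if_pos hm, sub_self]
  exact ⟨f₀, q, by rw [← hq]; ring, hf₀⟩

theorem prime_X (s : σ) : Prime (X s : MvPowerSeries σ k) := by
  refine ⟨fun h => ?_, fun h => ?_, fun f g hfg => ?_⟩
  · simpa [coeff_X] using congrArg (coeff (Finsupp.single s 1)) h
  · rw [isUnit_iff_constantCoeff, constantCoeff_X] at h
    exact not_isUnit_zero h
  · obtain ⟨f₀, p, hf, hf₀⟩ := exists_eq_add_X_mul s f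
    obtain ⟨g₀, q, hg, hg₀⟩ := exists_eq_add_X_mul s g
    have hdvd : X s ∣ f₀ * g₀ := by
      have h : f₀ * g₀ = f * g - X s * (p * g + f₀ * q) := by rw [hf, hg]; ring
      rw [h]
      exact dvd_sub hfg (dvd_mul_right _ _)
    have hzero : f₀ * g₀ = 0 := by
      ext m
      by_cases hm : m s = 0
      · simpa using X_dvd_iff.mp hdvd m hm
      · rw [coeff_mul, map_zero]
        refine Finset.sum_eq_zero fun ij hij => ?_
        rw [Finset.HasAntidiagonal.mem_antidiagonal] at hij
        have hs : ij.1 s + ij.2 s = m s := by rw [← hij, Finsupp.add_apply]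
        by_cases h1 : ij.1 s = 0
        · have h2 : ij.2 s ≠ 0 := by omega
          rw [hg₀, if_neg h2, mul_zero]
        · rw [hf₀, if_neg h1, zero_mul]
    rcases mul_eq_zero.mp hzero with h | h
    · exact Or.inl ⟨p, by rw [hf, h, zero_add]⟩
    · exact Or.inr ⟨q, by rw [hg, h, zero_add]⟩

/-- A power series all of whose monomials involve one of finitely many variables lies in the ideal
generated by these variables. -/
theorem mem_span_X_image (S : Finset σ) (f : MvPowerSeries σ k)
    (hf : ∀ m : σ →₀ ℕ, (∀ i ∈ S, m i = 0) → coeff m f = 0) :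
    f ∈ Ideal.span ((X : σ → MvPowerSeries σ k) '' S) := by
  induction S using Finset.induction_on generalizing f with
  | empty =>
    have : f = 0 := by
      ext m
      simpa using hf m (by simp)
    rw [this]
    exact zero_mem _
  | insert a S _ ih =>
    obtain ⟨f₀, q, hq, hf₀⟩ := exists_eq_add_X_mul a f
    rw [hq]
    refine add_mem (Ideal.span_mono (Set.image_mono (by simp)) (ih f₀ fun m hm => ?_))
      (Ideal.mul_mem_right _ _ (Ideal.subset_span ⟨a, by simp, rfl⟩))
    rw [hf₀]
    split_ifs with h
    · exact hf m (by simpa [h] using hm)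
    · rfl

theorem X_mem_maximalIdeal (s : σ) :
    (X s : MvPowerSeries σ k) ∈ IsLocalRing.maximalIdeal (MvPowerSeries σ k) := by
  simp [isUnit_iff_constantCoeff]

theorem maximalIdeal_le_span_range_X [Finite σ] :
    IsLocalRing.maximalIdeal (MvPowerSeries σ k) ≤
      Ideal.span (Set.range (X : σ → MvPowerSeries σ k)) := by
  have := Fintype.ofFinite σ
  intro f hf
  rw [← Set.image_univ, ← Finset.coe_univ]
  refine mem_span_X_image Finset.univ f fun m hm => ?_
  have hm0 : m = 0 := Finsupp.ext fun i => hm i (Finset.mem_univ i)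
  rw [hm0, coeff_zero_eq_constantCoeff_apply]
  simpa [isUnit_iff_constantCoeff] using hf

theorem mem_span_X_zero_X_one_of_X_two_mul_mem {f : MvPowerSeries (Fin 3) k}
    (hf : ∃ a b : MvPowerSeries (Fin 3) k, X 2 * f = X 0 * a + X 1 * b) :
    ∃ a b : MvPowerSeries (Fin 3) k, f = X 0 * a + X 1 * b := by
  obtain ⟨a, b, hab⟩ := hf
  have hmem : f ∈ Ideal.span
      ((X : Fin 3 → MvPowerSeries (Fin 3) k) '' ({0, 1} : Finset (Fin 3))) := by
    refine mem_span_X_image _ f fun m hm => ?_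
    have h0 : m 0 = 0 := hm 0 (by simp)
    have h1 : m 1 = 0 := hm 1 (by simp)
    have hc := congrArg (coeff (Finsupp.single 2 1 + m)) hab
    rw [X_def (2 : Fin 3), coeff_add_monomial_mul, one_mul, map_add,
      X_dvd_iff.mp (dvd_mul_right _ _) _ (by simp [h0]),
      X_dvd_iff.mp (dvd_mul_right _ _) _ (by simp [h1]), add_zero] at hc
    exact hc
  rw [Finset.coe_insert, Finset.coe_singleton, Set.image_pair, Ideal.mem_span_pair] at hmem
  obtain ⟨c, d, hcd⟩ := hmem
  exact ⟨c, d, by rw [← hcd]; ring⟩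

end MvPowerSeries

theorem X_zero_pow_dvd_xSeries {k : Type*} [Field k] {S : Set ℕ} {n : ℕ} (hS : ∀ i ∈ S, n ≤ i) :
    (MvPowerSeries.X 0 : MvPowerSeries (Fin 3) k) ^ n ∣ xSeries k S := by
  rw [MvPowerSeries.X_pow_dvd_iff]
  intro m hm
  refine if_neg ?_
  rintro ⟨i, hi, rfl⟩
  have := hS i hi
  simp at hm
  omega

/-- If `Φ` has determinant prime to `p`, then `p` is a nonzerodivisor on the cokernel of `Φ`. -/
theorem Matrix.mem_range_toLin'_of_prime_smul_mem {R : Type*} [CommRing R] [IsDomain R] {n : Type*}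
    [Fintype n] [DecidableEq n] {Φ : Matrix n n R} {p : R} (hp : Prime p) (hdet : ¬ p ∣ Φ.det)
    {v : n → R} (hv : p • v ∈ LinearMap.range (Matrix.toLin' Φ)) :
    v ∈ LinearMap.range (Matrix.toLin' Φ) := by
  obtain ⟨w, hw⟩ := hv
  rw [Matrix.toLin'_apply] at hw
  have hadj : Φ.det • w = p • (Φ.adjugate *ᵥ v) := by
    rw [← Matrix.mulVec_smul, ← hw, Matrix.mulVec_mulVec, Matrix.adjugate_mul, Matrix.smul_mulVec,
      Matrix.one_mulVec]
  have hdvd : ∀ i, ∃ c, w i = p * c := fun i =>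
    (hp.dvd_or_dvd ⟨_, congrFun hadj i⟩).resolve_left hdet
  choose u hu using hdvd
  obtain rfl : w = p • u := funext hu
  refine ⟨u, smul_right_injective _ hp.ne_zero ?_⟩
  simpa [Matrix.mulVec_smul] using hw

theorem Submodule.isWeaklyRegular_quotient_pair {R F : Type*} [CommRing R] [AddCommGroup F]
    [Module R F] {N : Submodule R F} {a b : R} (ha : ∀ v, a • v ∈ N → v ∈ N)
    (hb : ∀ v u, b • v - a • u ∈ N → ∃ u', v - a • u' ∈ N) :
    RingTheory.Sequence.IsWeaklyRegular (F ⧸ N) [a, b] := by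
  rw [RingTheory.Sequence.isWeaklyRegular_cons_iff,
    RingTheory.Sequence.isWeaklyRegular_singleton_iff]
  refine ⟨(isSMulRegular_quotient_iff_mem_of_smul_mem N a).mpr ha,
    (isSMulRegular_quotient_iff_mem_of_smul_mem _ b).mpr fun x hx => ?_⟩
  obtain ⟨v, rfl⟩ := N.mkQ_surjective x
  rw [Submodule.mem_smul_pointwise_iff_exists] at hx ⊢
  obtain ⟨u, -, hu⟩ := hx
  obtain ⟨u, rfl⟩ := N.mkQ_surjective u
  rw [← map_smul, ← map_smul, eq_comm, ← sub_eq_zero, ← map_sub, Submodule.mkQ_apply,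
    Submodule.Quotient.mk_eq_zero] at hu
  obtain ⟨u', hu'⟩ := hb v u hu
  refine ⟨N.mkQ u', trivial, ?_⟩
  rwa [← map_smul, eq_comm, ← sub_eq_zero, ← map_sub, Submodule.mkQ_apply,
    Submodule.Quotient.mk_eq_zero]

/-- A regular sequence whose quotient is killed by the maximal ideal computes the depth. -/
theorem depth_eq_length_of_isRegular {R M : Type*} [CommRing R] [IsLocalRing R] [IsNoetherianRing R]
    [AddCommGroup M] [Module R M] [Module.Finite R M] {rs : List R}
    (hmem : ∀ r ∈ rs, r ∈ IsLocalRing.maximalIdeal R) (hreg : RingTheory.Sequence.IsRegular M rs)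
    (hann : IsLocalRing.maximalIdeal R ≤
      Module.annihilator R (M ⧸ Ideal.ofList rs • (⊤ : Submodule R M))) :
    depth R M = rs.length := by
  have hdim : Module.supportDim R (M ⧸ Ideal.ofList rs • (⊤ : Submodule R M)) ≤ 0 := by
    have : Subsingleton (Module.support R (M ⧸ Ideal.ofList rs • (⊤ : Submodule R M))) := by
      have key : ∀ p ∈ Module.support R (M ⧸ Ideal.ofList rs • (⊤ : Submodule R M)),
          p.asIdeal = IsLocalRing.maximalIdeal R := fun p hp =>
        ((IsLocalRing.maximalIdeal.isMaximal R).eq_of_le p.2.ne_top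
          (hann.trans (Module.annihilator_le_of_mem_support hp))).symm
      exact ⟨fun p q => Subtype.ext (PrimeSpectrum.ext ((key p p.2).trans (key q q.2).symm))⟩
    exact Order.krullDim_nonpos_of_subsingleton
  refine le_antisymm (sSup_le ?_) (le_sSup ⟨rs, rfl, hmem, hreg⟩)
  rintro _ ⟨rs', rfl, -, hreg'⟩
  have : Nontrivial (M ⧸ Ideal.ofList rs' • (⊤ : Submodule R M)) :=
    Submodule.Quotient.nontrivial_iff.mpr hreg'.2.symm
  have hdim' : 0 ≤ Module.supportDim R (M ⧸ Ideal.ofList rs' • (⊤ : Submodule R M)) := by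
    have := Module.nonempty_support_of_nontrivial
      (R := R) (M := M ⧸ Ideal.ofList rs' • (⊤ : Submodule R M))
    have := this.to_subtype
    exact Order.krullDim_nonneg
  have h := Module.supportDim_add_length_eq_supportDim_of_isRegular rs hreg
  have h' := Module.supportDim_add_length_eq_supportDim_of_isRegular rs' hreg'
  have hle : ((rs'.length : ℕ) : WithBot ℕ∞) ≤ ((rs.length : ℕ) : WithBot ℕ∞) :=
    calc ((rs'.length : ℕ) : WithBot ℕ∞) = 0 + rs'.length := (zero_add _).symm
      _ ≤ _ := by gcongr
      _ = _ := h'.trans h.symm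
      _ ≤ 0 + rs.length := by gcongr
      _ = _ := zero_add _
  exact_mod_cast hle

section Cokernel

open MvPowerSeries

variable {k : Type*} [Field k]

theorem not_X_zero_dvd_det {s t : MvPowerSeries (Fin 3) k} (hs : X 0 ∣ s) (ht : X 0 ∣ t) :
    ¬ X 0 ∣ (!![X 2, X 1 + s; X 1 + t, X 2] : Matrix (Fin 2) (Fin 2) _).det := by
  intro h
  rw [Matrix.det_fin_two_of] at h
  obtain ⟨s, rfl⟩ := hs
  obtain ⟨t, rfl⟩ := ht
  have hmul : (X 0 : MvPowerSeries (Fin 3) k) ∣ (X 2 - X 1) * (X 2 + X 1) := by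
    have := dvd_add h (dvd_mul_right (X 0) (s * (X 1 + X 0 * t) + X 1 * t))
    convert this using 1
    ring
  rcases (prime_X 0).dvd_or_dvd hmul with h | h
  all_goals
    have := X_dvd_iff.mp h (Finsupp.single 2 1) (by simp)
    simp [coeff_X, Finsupp.single_left_inj] at this

theorem depth_cokernel_eq_two {s t : MvPowerSeries (Fin 3) k} (hs : X 0 ∣ s) (ht : X 0 ∣ t) :
    depth (MvPowerSeries (Fin 3) k) ((Fin 2 → MvPowerSeries (Fin 3) k) ⧸
      LinearMap.range (Matrix.toLin' !![X 2, X 1 + s; X 1 + t, X 2])) = 2 := by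
  have : IsDomain (MvPowerSeries (Fin 3) k) := NoZeroDivisors.to_isDomain _
  have hdet := not_X_zero_dvd_det hs ht
  obtain ⟨s, rfl⟩ := hs
  obtain ⟨t, rfl⟩ := ht
  set Φ : Matrix (Fin 2) (Fin 2) (MvPowerSeries (Fin 3) k) :=
    !![X 2, X 1 + X 0 * s; X 1 + X 0 * t, X 2] with hΦ
  set N := LinearMap.range (Matrix.toLin' Φ)
  have hx1 : ¬ (X 0 : MvPowerSeries (Fin 3) k) ∣ X 1 := fun h => by
    have := X_dvd_iff.mp h (Finsupp.single 1 1) (by simp)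
    simp at this
  have hmulVec : ∀ w, Φ *ᵥ w =
      ![X 2 * w 0 + (X 1 + X 0 * s) * w 1, (X 1 + X 0 * t) * w 0 + X 2 * w 1] := fun w => by
    ext i
    fin_cases i <;> simp [hΦ, Matrix.mulVec, dotProduct, Fin.sum_univ_two]
  have hmem : ∀ r ∈ ([X 0, X 1] : List (MvPowerSeries (Fin 3) k)),
      r ∈ IsLocalRing.maximalIdeal (MvPowerSeries (Fin 3) k) := by
    simp only [List.mem_cons, List.not_mem_nil, or_false]
    rintro r (rfl | rfl) <;> exact X_mem_maximalIdeal _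
  have hweak : RingTheory.Sequence.IsWeaklyRegular
      ((Fin 2 → MvPowerSeries (Fin 3) k) ⧸ N)
      ([X 0, X 1] : List (MvPowerSeries (Fin 3) k)) := by
    refine Submodule.isWeaklyRegular_quotient_pair
      (fun v => Matrix.mem_range_toLin'_of_prime_smul_mem (prime_X 0) hdet) ?_
    rintro v u ⟨w, hw⟩
    rw [Matrix.toLin'_apply, hmulVec] at hw
    have e0 := congrFun hw 0
    have e1 := congrFun hw 1
    simp only [Matrix.cons_val_zero, Matrix.cons_val_one, Pi.sub_apply, Pi.smul_apply,
      smul_eq_mul] at e0 e1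
    obtain ⟨a0, b0, h0⟩ := mem_span_X_zero_X_one_of_X_two_mul_mem (f := w 0)
      ⟨-(s * w 1) - u 0, v 0 - w 1, by linear_combination e0⟩
    obtain ⟨a1, b1, h1⟩ := mem_span_X_zero_X_one_of_X_two_mul_mem (f := w 1)
      ⟨-(t * w 0) - u 1, v 1 - w 0, by linear_combination e1⟩
    obtain ⟨c0, hc0⟩ : X 0 ∣ v 0 - (X 2 * b0 + (X 1 + X 0 * s) * b1) := by
      refine ((prime_X 0).dvd_or_dvd ?_).resolve_left hx1
      refine ⟨X 2 * a0 + (X 1 + X 0 * s) * a1 + u 0, ?_⟩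
      rw [h0, h1] at e0
      linear_combination -e0
    obtain ⟨c1, hc1⟩ : X 0 ∣ v 1 - ((X 1 + X 0 * t) * b0 + X 2 * b1) := by
      refine ((prime_X 0).dvd_or_dvd ?_).resolve_left hx1
      refine ⟨(X 1 + X 0 * t) * a0 + X 2 * a1 + u 1, ?_⟩
      rw [h0, h1] at e1
      linear_combination -e1
    refine ⟨![c0, c1], ![b0, b1], ?_⟩
    rw [Matrix.toLin'_apply, hmulVec]
    ext1 i
    fin_cases i
    · simp
      linear_combination -hc0
    · simp
      linear_combination -hc1
  have : Nontrivial ((Fin 2 → MvPowerSeries (Fin 3) k) ⧸ N) := by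
    rw [Submodule.Quotient.nontrivial_iff]
    intro htop
    obtain ⟨w, hw⟩ : ![1, 0] ∈ N := htop ▸ Submodule.mem_top
    rw [Matrix.toLin'_apply, hmulVec] at hw
    have := congrArg constantCoeff (congrFun hw 0)
    simp at this
  refine (depth_eq_length_of_isRegular hmem
    (.of_isWeaklyRegular_of_mem_maximalIdeal _ hmem hweak) ?_).trans (by simp)
  refine maximalIdeal_le_span_range_X.trans (Ideal.span_le.mpr ?_)
  have hsmul : ∀ r ∈ ([X 0, X 1] : List (MvPowerSeries (Fin 3) k)),
      ∀ m : (Fin 2 → MvPowerSeries (Fin 3) k) ⧸ N,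
      r • m ∈ Ideal.ofList ([X 0, X 1] : List (MvPowerSeries (Fin 3) k)) • (⊤ : Submodule (MvPowerSeries (Fin 3) k)
        ((Fin 2 → MvPowerSeries (Fin 3) k) ⧸ N)) := fun r hr m =>
    Submodule.smul_mem_smul (Ideal.subset_span hr) trivial
  rintro _ ⟨i, rfl⟩
  rw [SetLike.mem_coe, Module.mem_annihilator]
  intro m
  obtain ⟨m, rfl⟩ := Submodule.mkQ_surjective _ m
  rw [← map_smul, Submodule.mkQ_apply, Submodule.Quotient.mk_eq_zero]
  fin_cases i
  · exact hsmul _ (by simp) m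
  · exact hsmul _ (by simp) m
  · obtain ⟨v, rfl⟩ := N.mkQ_surjective m
    have hz : (X 2 : MvPowerSeries (Fin 3) k) • N.mkQ v =
        (X 0 : MvPowerSeries (Fin 3) k) • N.mkQ ![-(s * v 1), -(t * v 0)] +
          (X 1 : MvPowerSeries (Fin 3) k) • N.mkQ ![-v 1, -v 0] := by
      rw [← map_smul, ← map_smul, ← map_smul, ← map_add, ← sub_eq_zero, ← map_sub,
        Submodule.mkQ_apply, Submodule.Quotient.mk_eq_zero]
      refine ⟨v, ?_⟩
      rw [Matrix.toLin'_apply, hmulVec]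
      ext1 i
      fin_cases i
      · simp
        ring
      · simp
        ring
    exact hz ▸ add_mem (hsmul _ (by simp) _) (hsmul _ (by simp) _)

end Cokernel

/-- Matrices congruent modulo `a` have the same cokernel modulo `a`. -/
theorem Matrix.range_toLin'_sup_smul_top_le {R n : Type*} [CommRing R] [Fintype n] [DecidableEq n]
    {Φ Ψ : Matrix n n R} {a : Ideal R} (h : ∀ i j, Φ i j - Ψ i j ∈ a) :
    LinearMap.range (Matrix.toLin' Φ) ⊔ a • (⊤ : Submodule R (n → R)) ≤
      LinearMap.range (Matrix.toLin' Ψ) ⊔ a • (⊤ : Submodule R (n → R)) := by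
  refine sup_le ?_ le_sup_right
  rintro _ ⟨w, rfl⟩
  have hw : Matrix.toLin' Φ w = Matrix.toLin' Ψ w + (Φ - Ψ) *ᵥ w := by
    rw [Matrix.sub_mulVec, Matrix.toLin'_apply, Matrix.toLin'_apply, add_sub_cancel]
  rw [hw]
  refine Submodule.add_mem_sup ⟨w, rfl⟩ ?_
  rw [pi_eq_sum_univ' ((Φ - Ψ) *ᵥ w)]
  refine sum_mem fun i _ => Submodule.smul_mem_smul ?_ trivial
  exact sum_mem fun j _ => Ideal.mul_mem_right _ _ (h i j)

/-- Let `R = k[[x,y,z]]` and `L` the cokernel of the map `R² → R²` given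
by `Φ = [[z, y + Σ_{i≥1} x^{4i−2}], [y + Σ_{i≥1} x^{4i}, z]]`.  Then `Φ` is injective (the
two-term complex is exact in positive degrees), `depth L = 2`, and `L ⊗_R R/(x²,y²)` is
isomorphic to the `R/(x²,y²)`-module presented by `[[z, y], [y, z]]`. -/
theorem stmt9 (k : Type*) [Field k] :
    letI R := MvPowerSeries (Fin 3) k
    letI x : R := MvPowerSeries.X 0
    letI y : R := MvPowerSeries.X 1
    letI z : R := MvPowerSeries.X 2
    letI s₁ : R := xSeries k {m | ∃ i : ℕ, 1 ≤ i ∧ m = 4 * i - 2}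
    letI s₂ : R := xSeries k {m | ∃ i : ℕ, 1 ≤ i ∧ m = 4 * i}
    letI Φ : Matrix (Fin 2) (Fin 2) R := !![z, y + s₁; y + s₂, z]
    letI a : Ideal R := Ideal.span {x ^ 2, y ^ 2}
    letI L := (Fin 2 → R) ⧸ LinearMap.range (Matrix.toLin' Φ)
    Function.Injective (Matrix.toLin' Φ) ∧
    depth R L = 2 ∧
    Nonempty ((L ⧸ (a • (⊤ : Submodule R L))) ≃ₗ[R]
      ((Fin 2 → R) ⧸
        (LinearMap.range (Matrix.toLin' (!![z, y; y, z] : Matrix (Fin 2) (Fin 2) R)) ⊔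
          a • (⊤ : Submodule R (Fin 2 → R))))) := by
  have : IsDomain (MvPowerSeries (Fin 3) k) := NoZeroDivisors.to_isDomain _
  let R := MvPowerSeries (Fin 3) k
  let x : R := MvPowerSeries.X 0
  let y : R := MvPowerSeries.X 1
  let z : R := MvPowerSeries.X 2
  let s₁ : R := xSeries k {m | ∃ i : ℕ, 1 ≤ i ∧ m = 4 * i - 2}
  let s₂ : R := xSeries k {m | ∃ i : ℕ, 1 ≤ i ∧ m = 4 * i}
  let Φ : Matrix (Fin 2) (Fin 2) R := !![z, y + s₁; y + s₂, z]
  let a : Ideal R := Ideal.span {x ^ 2, y ^ 2}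
  let L := (Fin 2 → R) ⧸ LinearMap.range (Matrix.toLin' Φ)
  have hs₁ : x ^ 2 ∣ s₁ := X_zero_pow_dvd_xSeries (by rintro _ ⟨i, hi, rfl⟩; omega)
  have hs₂ : x ^ 2 ∣ s₂ := X_zero_pow_dvd_xSeries (by rintro _ ⟨i, hi, rfl⟩; omega)
  have hx : x ∣ x ^ 2 := dvd_pow_self x two_ne_zero
  refine ⟨?_, depth_cokernel_eq_two (hx.trans hs₁) (hx.trans hs₂), ⟨?_⟩⟩
  · have hdet : Φ.det ≠ 0 := fun h =>
      not_X_zero_dvd_det (hx.trans hs₁) (hx.trans hs₂) (h ▸ dvd_zero _)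
    rw [injective_iff_map_eq_zero]
    exact fun w hw => Matrix.eq_zero_of_mulVec_eq_zero hdet hw
  · have ha : ∀ f, x ^ 2 ∣ f → f ∈ a := fun f hf =>
      Ideal.mem_of_dvd _ hf (Ideal.subset_span (by simp))
    have hcongr : ∀ i j, Φ i j - (!![z, y; y, z] : Matrix (Fin 2) (Fin 2) R) i j ∈ a := by
      intro i j
      fin_cases i <;> fin_cases j <;> simp [Φ, ha _ hs₁, ha _ hs₂]
    have hsmul : a • (⊤ : Submodule R L) =
        (a • (⊤ : Submodule R (Fin 2 → R))).map (LinearMap.range (Matrix.toLin' Φ)).mkQ := by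
      rw [Submodule.map_smul'', Submodule.map_top, Submodule.range_mkQ]
    exact Submodule.quotEquivOfEq _ _ hsmul ≪≫ₗ
      Submodule.quotientQuotientEquivQuotientSup _ _ ≪≫ₗ
      Submodule.quotEquivOfEq _ _ (le_antisymm (Matrix.range_toLin'_sup_smul_top_le hcongr)
        (Matrix.range_toLin'_sup_smul_top_le fun i j => by
          rw [← neg_sub]; exact neg_mem (hcongr i j)))
end

section
/- Let (R, m) be a regular local ring and let a, b be ideals of R with √(a + b) = m. If a is an equimultiple ideal (i.e., its analytic spread equals its height) and b does not contain any minimal generator of a^n for some sufficiently large n (equivalently, b ∩ a^n ⊆ m·a^n for all large n), then dim(R/a) + dim(R/b) = dim R. -/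
open Filter

/-- The minimal number of generators of an `R`-module. -/
noncomputable def minGen (R : Type*) [Semiring R] (M : Type*) [AddCommMonoid M]
    [Module R M] : ℕ :=
  sInf {k | ∃ s : Finset M, s.card = k ∧ Submodule.span R (s : Set M) = ⊤}

/-- The height of an ideal: the infimum of the heights of the primes containing it. -/
noncomputable def idealHeight {R : Type*} [CommRing R] (a : Ideal R) : ℕ∞ :=
  ⨅ p : {p : PrimeSpectrum R // a ≤ p.asIdeal}, Order.height p.1

open IsLocalRing

theorem isDomain_of_span_card_le (n : ℕ) : ∀ (R : Type*) [CommRing R] [IsNoetherianRing R]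
    [IsLocalRing R] (s : Finset R), s.card ≤ n → (n : WithBot ℕ∞) ≤ ringKrullDim R →
    Ideal.span (s : Set R) = maximalIdeal R → IsDomain R := by
  classical
  induction n with
  | zero =>
    intro R _ _ _ s hs _ hspan
    have : s = ∅ := by simpa using hs
    subst this
    have hbot : maximalIdeal R = ⊥ := by simpa using hspan.symm
    exact (isField_iff_maximalIdeal_eq.mpr hbot).isDomain
  | succ n ih =>
    intro R _ _ _ s hs hdim hspan
    have hfin : (minimalPrimes R).Finite := minimalPrimes.finite_of_isNoetherianRing R
    have hmin : maximalIdeal R ∉ minimalPrimes R := by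
      intro hm
      have h0 := Ideal.height_eq_zero_iff.mpr hm
      rw [← maximalIdeal_height_eq_ringKrullDim, h0] at hdim
      norm_cast at hdim
    obtain ⟨x, hxm, hx2, hxmin⟩ : ∃ x ∈ maximalIdeal R, x ∉ maximalIdeal R ^ 2 ∧
        ∀ P ∈ minimalPrimes R, x ∉ P := by
      by_contra! hcon
      have hsub : (maximalIdeal R : Set R) ⊆
          ⋃ P ∈ (↑(insert (maximalIdeal R ^ 2) hfin.toFinset) : Set (Ideal R)), (P : Set R) := by
        intro x hx
        by_cases hx2 : x ∈ maximalIdeal R ^ 2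
        · exact Set.mem_biUnion (by simp) hx2
        · obtain ⟨P, hP, hxP⟩ := hcon x hx hx2
          exact Set.mem_biUnion (by simp [hP]) hxP
      rw [Finset.coe_insert] at hsub
      have := (Ideal.subset_union_prime (f := id) (s := insert (maximalIdeal R ^ 2) hfin.toFinset)
        (maximalIdeal R ^ 2) (maximalIdeal R ^ 2) (fun P hP h1 _ => by
          simp only [Finset.mem_insert, h1, false_or, Set.Finite.mem_toFinset] at hP
          exact hP.1.1)).mp (by simpa using hsub)
      obtain ⟨P, hP, hle⟩ := this
      simp only [Finset.mem_insert, Set.Finite.mem_toFinset] at hP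
      rcases hP with rfl | hP
      · have hz : maximalIdeal R = ⊥ := by
          apply Submodule.eq_bot_of_le_smul_of_le_jacobson_bot (maximalIdeal R) _
            (IsNoetherian.noetherian _) _ (maximalIdeal_le_jacobson _)
          rw [smul_eq_mul, ← pow_two]
          exact hle
        apply hmin
        have := (isField_iff_maximalIdeal_eq.mpr hz).isDomain
        rw [hz, IsDomain.minimalPrimes_eq_singleton_bot]
        rfl
      · have := hP.1.1
        have := (maximalIdeal.isMaximal R).eq_of_le this.ne_top hle
        exact hmin (by rw [this]; exact hP)
    have hxs : x ∈ Ideal.span (s : Set R) := hspan ▸ hxm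
    obtain ⟨c, -, hc⟩ := Submodule.mem_span_finset.mp hxs
    obtain ⟨y, hy, hu⟩ : ∃ y ∈ s, IsUnit (c y) := by
      by_contra! hcon
      apply hx2
      rw [← hc, pow_two]
      refine Ideal.sum_mem _ fun y hy => Ideal.mul_mem_mul ?_ ?_
      · exact hcon y hy
      · rw [← hspan]; exact Ideal.subset_span hy
    have hle : maximalIdeal R ≤ Ideal.span {x} ⊔ Ideal.span (s.erase y : Set R) := by
      rw [← hspan, Ideal.span_le]
      intro z hz
      by_cases hzy : z = y
      · subst hzy
        obtain ⟨u, hu⟩ := hu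
        have : (u : R) * z = x - ∑ i ∈ s.erase z, c i * i := by
          rw [← hc, ← Finset.add_sum_erase _ _ hy, hu]; simp
        rw [SetLike.mem_coe, ← Ideal.unit_mul_mem_iff_mem _ u.isUnit, this]
        refine sub_mem (Ideal.mem_sup_left (Ideal.mem_span_singleton_self x)) (Ideal.mem_sup_right ?_)
        exact Ideal.sum_mem _ fun i hi => Ideal.mul_mem_left _ _ (Ideal.subset_span (by simpa [and_comm] using hi))
      · exact Ideal.mem_sup_right (Ideal.subset_span (by simpa using ⟨hz, hzy⟩))
    have hxne : Ideal.span {x} ≠ ⊤ := fun h =>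
      (maximalIdeal.isMaximal R).ne_top (top_le_iff.mp (h ▸ (Ideal.span_singleton_le_iff_mem _).mpr hxm))
    have : Nontrivial (R ⧸ Ideal.span {x}) := Ideal.Quotient.nontrivial_iff.mpr hxne
    have hloc : IsLocalRing (R ⧸ Ideal.span {x}) :=
      IsLocalRing.of_surjective' (Ideal.Quotient.mk _) Ideal.Quotient.mk_surjective
    have hdom : IsDomain (R ⧸ Ideal.span {x}) := by
      refine ih (R ⧸ Ideal.span {x}) ((s.erase y).image (Ideal.Quotient.mk _)) ?_ ?_ ?_
      · have := Finset.card_erase_of_mem hy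
        have := Finset.card_image_le (s := s.erase y) (f := Ideal.Quotient.mk (Ideal.span {x}))
        omega
      · have h1 := ringKrullDim_le_ringKrullDim_quotient_add_encard ({x} : Set R)
          (by simpa [IsLocalRing.ringJacobson_eq_maximalIdeal] using hxm)
        have h2 := hdim.trans h1
        simp only [Set.encard_singleton, Nat.cast_add, Nat.cast_one] at h2
        exact ENat.WithBot.add_le_add_one_right_iff.mp (by simpa using h2)
      · have : IsLocalHom (Ideal.Quotient.mk (Ideal.span {x})) :=
          IsLocalHom.of_surjective _ Ideal.Quotient.mk_surjective
        rw [Finset.coe_image, ← Ideal.map_span]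
        apply le_antisymm
        · rw [Ideal.map_le_iff_le_comap, maximalIdeal_comap, ← hspan]
          exact Ideal.span_mono (by simp)
        · rw [← Ideal.map_comap_of_surjective (Ideal.Quotient.mk (Ideal.span {x}))
            Ideal.Quotient.mk_surjective (maximalIdeal _), maximalIdeal_comap]
          refine (Ideal.map_mono hle).trans ?_
          rw [Ideal.map_sup, Ideal.map_quotient_self, bot_sup_eq]
    have hprime : (Ideal.span {x}).IsPrime := (Ideal.Quotient.isDomain_iff_prime _).mp hdom
    obtain ⟨P, hP, hPx⟩ := Ideal.exists_minimalPrimes_le (I := ⊥) (J := Ideal.span {x}) bot_le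
    have hPp : P.IsPrime := hP.1.1
    have hP0 : P = ⊥ := by
      apply Submodule.eq_bot_of_le_smul_of_le_jacobson_bot (Ideal.span {x}) P
        (IsNoetherian.noetherian _)
      · intro y hy
        obtain ⟨z, rfl⟩ := Ideal.mem_span_singleton'.mp (hPx hy)
        rw [mul_comm]
        exact Ideal.mul_mem_mul (Ideal.mem_span_singleton_self x)
          ((hPp.mem_or_mem hy).resolve_right (hxmin P hP))
      · exact ((Ideal.span_singleton_le_iff_mem _).mpr hxm).trans (maximalIdeal_le_jacobson _)
    have : (⊥ : Ideal R).IsPrime := hP0 ▸ hPp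
    exact IsDomain.of_bot_isPrime R

theorem ringKrullDim_quotient_add_le {R : Type*} [CommRing R] (I : Ideal R) (h : ℕ)
    (hh : ∀ p : PrimeSpectrum R, I ≤ p.asIdeal → (h : ℕ∞) ≤ Order.height p) :
    ringKrullDim (R ⧸ I) + h ≤ ringKrullDim R := by
  by_cases hI : I = ⊤
  · rw [hI, ringKrullDim_eq_bot_of_subsingleton]; simp
  have : Nonempty (PrimeSpectrum.zeroLocus (R := R) I) := by
    rwa [Set.nonempty_coe_sort, Set.nonempty_iff_ne_empty, ne_eq,
      PrimeSpectrum.zeroLocus_empty_iff_eq_top]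
  have := Ideal.Quotient.nontrivial_iff.mpr hI
  have := (Ideal.Quotient.mk I).domain_nontrivial
  rw [ringKrullDim_quotient, Order.krullDim_eq_iSup_length, ringKrullDim,
    Order.krullDim_eq_iSup_length]
  have hc : (h : WithBot ℕ∞) = ((h : ℕ∞) : WithBot ℕ∞) := rfl
  rw [hc, ← WithBot.coe_add, ENat.iSup_add, WithBot.coe_le_coe, iSup_le_iff]
  intro l
  obtain ⟨q, hq, hl⟩ := Order.exists_series_of_le_height _ (hh l.head.1 l.head.2)
  refine le_trans ?_ (le_iSup _ (q.smash (l.map Subtype.val (Subtype.strictMono_coe _)) (by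
    rw [LTSeries.head_map]; exact hq)))
  simp [hl, add_comm]

theorem length_quotient_maximalIdeal_smul_le {R M : Type*} [CommRing R] [IsLocalRing R]
    [AddCommGroup M] [Module R M] [Module.Finite R M] :
    Module.length R (M ⧸ (maximalIdeal R • ⊤ : Submodule R M)) ≤ minGen R M := by
  have hne : {k | ∃ s : Finset M, s.card = k ∧ Submodule.span R (s : Set M) = ⊤}.Nonempty := by
    obtain ⟨s, hs⟩ := Module.Finite.fg_top (R := R) (M := M)
    exact ⟨_, s, rfl, hs⟩
  obtain ⟨s, hs, hspan⟩ := Nat.sInf_mem hne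
  have hsm : s.card = minGen R M := hs
  rw [← hsm]
  let _ : Field (R ⧸ maximalIdeal R) := Ideal.Quotient.field _
  rw [Module.length_eq_of_surjective (S := R) (R := R ⧸ maximalIdeal R)
    (M := M ⧸ (maximalIdeal R • ⊤ : Submodule R M)) Ideal.Quotient.mk_surjective,
    Module.length_eq_finrank, Nat.cast_le]
  classical
  let t : Finset (M ⧸ (maximalIdeal R • ⊤ : Submodule R M)) :=
    s.image (Submodule.mkQ _)
  have ht : Submodule.span (R ⧸ maximalIdeal R)
      (t : Set (M ⧸ (maximalIdeal R • ⊤ : Submodule R M))) = ⊤ := by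
    rw [← Submodule.restrictScalars_eq_top_iff R, Submodule.restrictScalars_span _ _
      Ideal.Quotient.mk_surjective, Finset.coe_image, ← Submodule.map_span, hspan,
      Submodule.map_top, Submodule.range_mkQ]
  calc Module.finrank (R ⧸ maximalIdeal R) (M ⧸ (maximalIdeal R • ⊤ : Submodule R M))
      = (t : Set (M ⧸ (maximalIdeal R • ⊤ : Submodule R M))).finrank (R ⧸ maximalIdeal R) := by
        rw [Set.finrank, ht, finrank_top]
    _ ≤ t.card := finrank_span_finset_le_card t
    _ ≤ s.card := Finset.card_image_le

/-- The length of the degree `n` piece of the fibre cone of `a`. -/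
noncomputable def fiberLength {R : Type*} [CommRing R] [IsLocalRing R] (a : Ideal R) (n : ℕ) : ℕ∞ :=
  Module.length R (↥(a ^ n) ⧸ Submodule.comap (a ^ n).subtype (maximalIdeal R * a ^ n))

theorem fiberLength_le_minGen {R : Type*} [CommRing R] [IsNoetherianRing R] [IsLocalRing R]
    (a : Ideal R) (n : ℕ) : fiberLength a n ≤ minGen R ↥(a ^ n) := by
  have : Submodule.comap (a ^ n).subtype (maximalIdeal R * a ^ n) =
      (maximalIdeal R • ⊤ : Submodule R ↥(a ^ n)) := by
    apply Submodule.map_injective_of_injective (a ^ n).subtype_injective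
    rw [Submodule.map_smul'', Submodule.map_top, Submodule.range_subtype,
      Submodule.map_comap_subtype, smul_eq_mul, inf_eq_right]
    exact Ideal.mul_le_right (I := maximalIdeal R)
  rw [fiberLength, this]
  exact length_quotient_maximalIdeal_smul_le

theorem length_quotient_eq_add_length_quotient_sup {R E : Type*} [Ring R] [AddCommGroup E] [Module R E]
    (K N : Submodule R E) :
    Module.length R (E ⧸ K) =
      Module.length R (↥N ⧸ K.comap N.subtype) + Module.length R (E ⧸ (K ⊔ N)) := by
  refine Module.length_eq_add_of_exact ((K.comap N.subtype).mapQ K N.subtype le_rfl)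
    (Submodule.factor le_sup_left) ?_ (Submodule.factor_surjective _) ?_
  · rw [← LinearMap.ker_eq_bot, Submodule.ker_mapQ]
    simp
  · rw [LinearMap.exact_iff, Submodule.range_mapQ, Submodule.factor, Submodule.ker_mapQ]
    simp [Submodule.map_sup]

section
variable {R : Type*} [CommRing R]

theorem length_quotient_sup_span_pow_le (I : Ideal R) (y : R) (n : ℕ) :
    Module.length R (R ⧸ (I ⊔ Ideal.span {y ^ n})) ≤
      n * Module.length R (R ⧸ (I ⊔ Ideal.span {y})) := by
  induction n with
  | zero =>
    have : Subsingleton (R ⧸ (I ⊔ Ideal.span {y ^ 0})) :=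
      Ideal.Quotient.subsingleton_iff.mpr (by simp)
    simp
  | succ n ih =>
    rw [length_quotient_eq_add_length_quotient_sup (I ⊔ Ideal.span {y ^ (n + 1)}) (Ideal.span {y ^ n})]
    have h1 : I ⊔ Ideal.span {y ^ (n + 1)} ⊔ Ideal.span {y ^ n} = I ⊔ Ideal.span {y ^ n} := by
      rw [sup_assoc]
      congr 1
      rw [sup_eq_right, Ideal.span_singleton_le_span_singleton]
      exact pow_dvd_pow _ (Nat.le_succ n)
    rw [h1, Nat.cast_succ, add_mul, one_mul, add_comm]
    refine add_le_add ih ?_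
    let f : R →ₗ[R] ↥(Ideal.span {y ^ n}) :=
      LinearMap.toSpanSingleton R _ ⟨y ^ n, Ideal.mem_span_singleton_self _⟩
    have hf : Function.Surjective f := by
      rintro ⟨z, hz⟩
      obtain ⟨c, rfl⟩ := Ideal.mem_span_singleton'.mp hz
      exact ⟨c, rfl⟩
    have hle : I ⊔ Ideal.span {y} ≤ (Submodule.comap (Ideal.span {y ^ n}).subtype
        (I ⊔ Ideal.span {y ^ (n + 1)})).comap f := by
      refine sup_le (fun r hr => ?_) ((Ideal.span_singleton_le_iff_mem _).mpr ?_)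
      · exact Ideal.mem_sup_left (I.mul_mem_right _ hr)
      · refine Ideal.mem_sup_right (Ideal.mem_span_singleton.mpr ?_)
        simp [f, pow_succ']
    refine Module.length_le_of_surjective (Submodule.mapQ _ _ f hle) ?_
    intro z
    obtain ⟨w, rfl⟩ := Submodule.mkQ_surjective _ z
    obtain ⟨r, rfl⟩ := hf w
    exact ⟨Submodule.Quotient.mk r, rfl⟩

theorem length_quotient_sup_span_image_pow_le (s : Finset R) (n : ℕ) (I : Ideal R) :
    Module.length R (R ⧸ (I ⊔ Ideal.span ((· ^ n) '' (s : Set R)))) ≤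
      (n : ℕ∞) ^ s.card * Module.length R (R ⧸ (I ⊔ Ideal.span (s : Set R))) := by
  classical
  induction s using Finset.induction_on generalizing I with
  | empty =>
    rw [Finset.coe_empty, Set.image_empty, Finset.card_empty, pow_zero, one_mul]
  | insert y s hy ih =>
    rw [Finset.coe_insert, Set.image_insert_eq, Ideal.span_insert, Ideal.span_insert,
      ← sup_assoc, ← sup_assoc, Finset.card_insert_of_notMem hy, pow_succ, mul_assoc]
    refine (ih _).trans ?_
    refine mul_le_mul_right ?_ _
    rw [sup_right_comm, sup_right_comm I (Ideal.span {y})]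
    exact length_quotient_sup_span_pow_le _ _ _

theorem length_quotient_ne_top [IsNoetherianRing R] [IsLocalRing R] (J : Ideal R)
    (hJ : maximalIdeal R ≤ J.radical) : Module.length R (R ⧸ J) ≠ ⊤ := by
  by_cases htop : J = ⊤
  · have : Subsingleton (R ⧸ J) := Ideal.Quotient.subsingleton_iff.mpr htop
    simp
  have : Ring.KrullDimLE 0 (R ⧸ J) := by
    rw [Ideal.krullDimLE_zero_quotient_iff_forall_minimalPrimes_isMaximal]
    intro P hP
    have := hP.1.1
    have hle : maximalIdeal R ≤ P := hJ.trans ((Ideal.IsPrime.radical_le_iff this).mpr hP.1.2)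
    rw [← (maximalIdeal.isMaximal R).eq_of_le this.ne_top hle]
    infer_instance
  have : IsArtinianRing (R ⧸ J) := by
    rw [isArtinianRing_iff_isNoetherianRing_krullDimLE_zero]
    exact ⟨inferInstance, this⟩
  rw [Module.length_eq_of_surjective (S := R) (R := R ⧸ J) (M := R ⧸ J)
    Ideal.Quotient.mk_surjective]
  exact Module.length_ne_top
end

theorem exists_finset_le_radical_sup {R : Type*} [CommRing R] [IsNoetherianRing R] [IsLocalRing R]
    (a b : Ideal R) (hrad : (a ⊔ b).radical = maximalIdeal R) (d : ℕ)
    (hd : ringKrullDim (R ⧸ b) = d) :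
    ∃ s : Finset R, s.card ≤ d ∧ (s : Set R) ⊆ a ∧
      maximalIdeal R ≤ (b ⊔ Ideal.span (s : Set R)).radical := by
  classical
  have hb : b ≤ maximalIdeal R := hrad ▸ le_sup_right.trans Ideal.le_radical
  have hbne : b ≠ ⊤ := fun h => (maximalIdeal.isMaximal R).ne_top (top_le_iff.mp (h ▸ hb))
  have : Nontrivial (R ⧸ b) := Ideal.Quotient.nontrivial_iff.mpr hbne
  have hloc : IsLocalRing (R ⧸ b) :=
    IsLocalRing.of_surjective' (Ideal.Quotient.mk _) Ideal.Quotient.mk_surjective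
  have : IsLocalHom (Ideal.Quotient.mk b) := IsLocalHom.of_surjective _ Ideal.Quotient.mk_surjective
  obtain ⟨t, ht, htc⟩ :=
    Ideal.exists_finset_card_eq_height_of_isNoetherianRing (maximalIdeal (R ⧸ b))
  have htd : t.card = d := by
    have := maximalIdeal_height_eq_ringKrullDim (R := R ⧸ b)
    rw [← htc, hd] at this
    exact_mod_cast this
  have hpow : ∀ z ∈ t, ∃ y ∈ a, ∃ n : ℕ, Ideal.Quotient.mk b y = z ^ n := by
    intro z hz
    obtain ⟨x, rfl⟩ := Ideal.Quotient.mk_surjective z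
    have hx : x ∈ maximalIdeal R := by
      rw [← maximalIdeal_comap (Ideal.Quotient.mk b)]
      exact ht.1.2 (Ideal.subset_span hz)
    rw [← hrad] at hx
    obtain ⟨n, hn⟩ := hx
    obtain ⟨y, hy, w, hw, hyw⟩ := Submodule.mem_sup.mp hn
    refine ⟨y, hy, n, ?_⟩
    rw [← map_pow, ← hyw, map_add, Ideal.Quotient.eq_zero_iff_mem.mpr hw, add_zero]
  choose! f hfa n hfn using hpow
  refine ⟨t.image f, Finset.card_image_le.trans htd.le, ?_, ?_⟩
  · intro y hy
    obtain ⟨z, hz, rfl⟩ := Finset.mem_image.mp (Finset.mem_coe.mp hy)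
    exact hfa z hz
  · rw [Ideal.radical_eq_sInf]
    refine le_sInf ?_
    rintro P ⟨hP, hPp⟩
    have hbP : b ≤ P := le_sup_left.trans hP
    have hPmap : (P.map (Ideal.Quotient.mk b)).IsPrime :=
      Ideal.map_isPrime_of_surjective Ideal.Quotient.mk_surjective (by simpa using hbP)
    have hcomap : (P.map (Ideal.Quotient.mk b)).comap (Ideal.Quotient.mk b) = P := by
      rw [Ideal.comap_map_of_surjective _ Ideal.Quotient.mk_surjective]
      simpa [← RingHom.ker_eq_comap_bot] using hbP
    have hspan : Ideal.span (t : Set (R ⧸ b)) ≤ P.map (Ideal.Quotient.mk b) := by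
      rw [Ideal.span_le]
      intro z hz
      have hfz : f z ∈ P := hP (Ideal.mem_sup_right (Ideal.subset_span (by
        simpa using ⟨z, hz, rfl⟩)))
      refine hPmap.mem_of_pow_mem (n z) ?_
      rw [← hfn z hz]
      exact Ideal.mem_map_of_mem _ hfz
    have := ht.2 ⟨hPmap, hspan⟩ (le_maximalIdeal hPmap.ne_top)
    rw [← hcomap, ← maximalIdeal_comap (Ideal.Quotient.mk b)]
    exact Ideal.comap_mono this

theorem exists_sum_fiberLength_le {R : Type*} [CommRing R] [IsNoetherianRing R] [IsLocalRing R]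
    (a b : Ideal R) (hrad : (a ⊔ b).radical = maximalIdeal R)
    (hb : ∀ᶠ n : ℕ in atTop, b ⊓ a ^ n ≤ maximalIdeal R * a ^ n) (d : ℕ)
    (hd : ringKrullDim (R ⧸ b) = d) :
    ∃ C : ℕ, ∀ n : ℕ, ∑ k ∈ Finset.range n, fiberLength a k ≤ C * ((n : ℕ∞) + 1) ^ d := by
  obtain ⟨n₀, hn₀⟩ := eventually_atTop.mp hb
  obtain ⟨s, hsd, hsa, hs⟩ := exists_finset_le_radical_sup a b hrad d hd
  have ham : a ≤ maximalIdeal R := hrad ▸ le_sup_left.trans Ideal.le_radical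
  have hstep : ∀ n, ∑ k ∈ Finset.range n, fiberLength a k ≤
      ∑ k ∈ Finset.range n₀, fiberLength a k + Module.length R (R ⧸ (b ⊔ a ^ n)) := by
    intro n
    rcases le_total n n₀ with hn | hn
    · exact (Finset.sum_le_sum_of_subset (by simpa using hn)).trans le_self_add
    induction n, hn using Nat.le_induction with
    | base => exact le_self_add
    | succ n hn ih =>
      have h1 : Module.length R (R ⧸ (b ⊔ maximalIdeal R * a ^ n)) =
          fiberLength a n + Module.length R (R ⧸ (b ⊔ a ^ n)) := by
        have : Submodule.comap (a ^ n).subtype (b ⊔ maximalIdeal R * a ^ n) =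
            Submodule.comap (a ^ n).subtype (maximalIdeal R * a ^ n) := by
          refine le_antisymm ?_ (Submodule.comap_mono le_sup_right)
          rintro ⟨x, hx⟩ hx'
          obtain ⟨y, hy, z, hz, hyz⟩ := Submodule.mem_sup.mp (Submodule.mem_comap.mp hx')
          rw [Submodule.subtype_apply] at hyz
          have hya : y ∈ a ^ n := by
            rw [eq_sub_of_add_eq hyz]
            exact sub_mem hx (Ideal.mul_le_right hz)
          change x ∈ maximalIdeal R * a ^ n
          rw [show x = y + z from hyz.symm]
          exact add_mem (hn₀ n hn ⟨hy, hya⟩) hz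
        rw [length_quotient_eq_add_length_quotient_sup (b ⊔ maximalIdeal R * a ^ n) (a ^ n), this,
          fiberLength, sup_assoc, sup_eq_right.mpr (Ideal.mul_le_right (I := maximalIdeal R))]
      have h2 : Module.length R (R ⧸ (b ⊔ maximalIdeal R * a ^ n)) ≤
          Module.length R (R ⧸ (b ⊔ a ^ (n + 1))) := by
        refine Module.length_le_of_surjective (Submodule.factor (sup_le_sup_left ?_ b))
          (Submodule.factor_surjective _)
        rw [pow_succ']
        exact Ideal.mul_mono_left ham
      rw [Finset.sum_range_succ]
      calc _ ≤ _ := add_le_add_left ih _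
        _ = ∑ k ∈ Finset.range n₀, fiberLength a k +
            (fiberLength a n + Module.length R (R ⧸ (b ⊔ a ^ n))) := by ring
        _ ≤ _ := by rw [← h1]; exact add_le_add_right h2 _
  have hpow : ∀ n : ℕ, Module.length R (R ⧸ (b ⊔ a ^ n)) ≤
      (n : ℕ∞) ^ s.card * Module.length R (R ⧸ (b ⊔ Ideal.span (s : Set R))) := by
    intro n
    refine le_trans ?_ (length_quotient_sup_span_image_pow_le s n b)
    refine Module.length_le_of_surjective (Submodule.factor (sup_le_sup_left ?_ b))
      (Submodule.factor_surjective _)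
    rw [Ideal.span_le]
    rintro _ ⟨y, hy, rfl⟩
    exact Ideal.pow_mem_pow (hsa hy) n
  obtain ⟨c, hc⟩ := ENat.ne_top_iff_exists.mp (length_quotient_ne_top _ hs)
  have hle : ∑ k ∈ Finset.range n₀, fiberLength a k ≤
      ((∑ k ∈ Finset.range n₀, minGen R ↥(a ^ k) : ℕ) : ℕ∞) := by
    push_cast
    exact Finset.sum_le_sum fun k _ => fiberLength_le_minGen a k
  refine ⟨(∑ k ∈ Finset.range n₀, minGen R ↥(a ^ k)) + c, fun n => ?_⟩
  have h1 : (1 : ℕ∞) ≤ (n : ℕ∞) + 1 := le_add_self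
  calc _ ≤ _ := hstep n
    _ ≤ ((∑ k ∈ Finset.range n₀, minGen R ↥(a ^ k) : ℕ) : ℕ∞) + (n : ℕ∞) ^ s.card * c := by
      rw [hc]; exact add_le_add hle (hpow n)
    _ ≤ ((∑ k ∈ Finset.range n₀, minGen R ↥(a ^ k) : ℕ) : ℕ∞) * ((n : ℕ∞) + 1) ^ d +
        ((n : ℕ∞) + 1) ^ d * c := by
      refine add_le_add (le_mul_of_one_le_right' (one_le_pow₀ h1)) (mul_le_mul_left ?_ _)
      exact (pow_le_pow_left' le_self_add _).trans (pow_le_pow_right₀ h1 hsd)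
    _ = _ := by push_cast; ring

theorem ringKrullDim_le_of_isIntegral {S B : Type*} [CommRing S] [CommRing B] (f : S →+* B)
    (hf : f.IsIntegral) : ringKrullDim B ≤ ringKrullDim S := by
  algebraize [f]
  refine Order.krullDim_le_of_strictMono (PrimeSpectrum.comap f) ?_
  intro p q hpq
  exact Ideal.IsIntegral.comap_lt_comap (R := S) (A := B) (I := p.asIdeal) (J := q.asIdeal) hpq

theorem le_of_forall_pow_le_mul_pow {e d C D : ℕ}
    (h : ∀ n : ℕ, (n + 1) ^ e ≤ C * (D * n + 1) ^ d) : e ≤ d := by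
  by_contra! hlt
  set K := C * (D + 1) ^ d
  have h1 := h K
  have h2 : C * (D * K + 1) ^ d ≤ K * (K + 1) ^ d := by
    calc C * (D * K + 1) ^ d ≤ C * ((D + 1) * (K + 1)) ^ d := by gcongr; nlinarith
      _ = K * (K + 1) ^ d := by rw [mul_pow, ← mul_assoc]
  have h3 : (K + 1) ^ (d + 1) ≤ (K + 1) ^ e := Nat.pow_le_pow_right (Nat.succ_pos _) hlt
  have h4 : (K + 1) * (K + 1) ^ d ≤ K * (K + 1) ^ d := by
    rw [← pow_succ']; exact h3.trans (h1.trans h2)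
  have := Nat.le_of_mul_le_mul_right h4 (by positivity)
  omega

theorem ringKrullDim_le_of_filtration_growth {k B : Type*} [Field k] [CommRing B] [Nontrivial B]
    [Algebra k B] [Algebra.FiniteType k B] (V : ℕ → Submodule k B) (hmono : Monotone V)
    (hone : 1 ∈ V 0) (hmul : ∀ i j x y, x ∈ V i → y ∈ V j → x * y ∈ V (i + j))
    (hex : ∀ x, ∃ n, x ∈ V n) (C d : ℕ)
    (hC : ∀ n : ℕ, Module.length k (V n) ≤ C * ((n : ℕ∞) + 1) ^ d) : ringKrullDim B ≤ d := by
  classical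
  obtain ⟨e, g, hg, hint⟩ := exists_integral_inj_algHom_of_fg k B
  choose N hN using hex
  set D := ∑ i, N (g (MvPolynomial.X i))
  have hD : ∀ i, g (MvPolynomial.X i) ∈ V D := fun i =>
    hmono (Finset.single_le_sum (f := fun i => N (g (MvPolynomial.X i)))
      (fun _ _ => Nat.zero_le _) (Finset.mem_univ i)) (hN _)
  have hpow : ∀ i m, g (MvPolynomial.X i) ^ m ∈ V (D * m) := by
    intro i m
    induction m with
    | zero => simpa using hone
    | succ m ih => rw [pow_succ, mul_add_one]; exact hmul _ _ _ _ ih (hD i)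
  have hprod : ∀ (c : Fin e → ℕ) (s : Finset (Fin e)),
      ∏ i ∈ s, g (MvPolynomial.X i) ^ c i ∈ V (∑ i ∈ s, D * c i) := by
    intro c s
    induction s using Finset.induction_on with
    | empty => simpa using hone
    | insert i s hi ih =>
      rw [Finset.prod_insert hi, Finset.sum_insert hi]
      exact hmul _ _ _ _ (hpow i _) ih
  have hle : e ≤ d := by
    refine le_of_forall_pow_le_mul_pow (C := C) (D := e * D) fun n => ?_
    let ι : (Fin e → Fin (n + 1)) → (Fin e →₀ ℕ) := fun c =>
      Finsupp.equivFunOnFinite.symm fun i => (c i : ℕ)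
    have hι : Function.Injective ι := by
      intro c c' h
      funext i
      exact Fin.ext (DFunLike.congr_fun h i)
    let v : (Fin e → Fin (n + 1)) → B := fun c => g (MvPolynomial.monomial (ι c) 1)
    have hv : LinearIndependent k v := by
      have hve : v = g.toLinearMap ∘ MvPolynomial.basisMonomials (Fin e) k ∘ ι := by
        funext c
        simp [v]
      rw [hve]
      exact ((MvPolynomial.basisMonomials (Fin e) k).linearIndependent.comp ι hι).map'
        g.toLinearMap (LinearMap.ker_eq_bot.mpr hg)
    have hspan : Submodule.span k (Set.range v) ≤ V (e * D * n) := by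
      rw [Submodule.span_le]
      rintro _ ⟨c, rfl⟩
      have h1 : v c = ∏ i, g (MvPolynomial.X i) ^ (c i : ℕ) := by
        simp only [v]
        rw [MvPolynomial.monomial_eq, map_mul]
        simp [ι, Finsupp.prod_fintype]
      rw [SetLike.mem_coe, h1]
      refine hmono ?_ (hprod _ _)
      calc ∑ i, D * (c i : ℕ) ≤ ∑ _i : Fin e, D * n :=
            Finset.sum_le_sum fun i _ => Nat.mul_le_mul_left _ (Nat.lt_succ_iff.mp (c i).2)
        _ = e * D * n := by simp [mul_assoc]
    have h2 := Module.length_le_of_injective (Submodule.inclusion hspan)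
      (Submodule.inclusion_injective hspan)
    have : Module.Finite k (Submodule.span k (Set.range v)) :=
      Module.Finite.span_of_finite k (Set.finite_range v)
    rw [Module.length_eq_finrank, finrank_span_eq_card hv] at h2
    have h3 := h2.trans (hC _)
    simp only [Fintype.card_pi, Fintype.card_fin, Finset.prod_const, Finset.card_univ] at h3
    exact_mod_cast h3
  calc ringKrullDim B ≤ ringKrullDim (MvPolynomial (Fin e) k) :=
        ringKrullDim_le_of_isIntegral g.toRingHom hint
    _ = e := by
        rw [MvPolynomial.ringKrullDim_of_isNoetherianRing, ringKrullDim_eq_zero_of_field]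
        simp
    _ ≤ d := by exact_mod_cast hle

section Graded
variable {A σ : Type*} [CommRing A] [SetLike σ A] [AddSubgroupClass σ A] (𝒜 : ℕ → σ)
  [GradedRing 𝒜]

theorem exists_homogeneous_forall_notMem (T : Finset (Ideal A)) (hT : ∀ P ∈ T, P.IsPrime)
    (hrel : ∀ P ∈ T, ∃ n > 0, ∃ x ∈ 𝒜 n, x ∉ P) :
    ∃ n > 0, ∃ z ∈ 𝒜 n, ∀ P ∈ T, z ∉ P := by
  classical
  induction T using Finset.strongInduction with
  | H T ih =>
    rcases T.eq_empty_or_nonempty with rfl | ⟨P₀, hP₀⟩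
    · exact ⟨1, one_pos, 0, zero_mem _, by simp⟩
    by_cases hcard : T.erase P₀ = ∅
    · obtain ⟨n, hn, x, hx, hxP⟩ := hrel P₀ hP₀
      refine ⟨n, hn, x, hx, fun P hP => ?_⟩
      by_cases h : P = P₀
      · rwa [h]
      · exact absurd (Finset.mem_erase.mpr ⟨h, hP⟩) (by simp [hcard])
    have hex : ∀ P ∈ T, ∃ n > 0, ∃ z ∈ 𝒜 n, ∀ P' ∈ T.erase P, z ∉ P' := fun P hP =>
      ih _ (Finset.erase_ssubset hP) (fun P' h => hT P' (Finset.mem_of_mem_erase h))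
        (fun P' h => hrel P' (Finset.mem_of_mem_erase h))
    choose! n hn x hx hxP using hex
    by_cases hall : ∀ P ∈ T, x P ∈ P
    · set u := ∏ P ∈ T.erase P₀, x P
      set m := ∑ P ∈ T.erase P₀, n P
      have hu : u ∈ 𝒜 m :=
        SetLike.prod_mem_graded 𝒜 _ _ fun P hP => hx P (Finset.mem_of_mem_erase hP)
      have hm : 0 < m := Finset.sum_pos (fun P hP => hn P (Finset.mem_of_mem_erase hP))
        (Finset.nonempty_iff_ne_empty.mpr hcard)
      have huP : ∀ P ∈ T.erase P₀, u ∈ P := fun P hP =>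
        Ideal.mem_of_dvd _ (Finset.dvd_prod_of_mem x hP) (hall P (Finset.mem_of_mem_erase hP))
      have huP₀ : u ∉ P₀ := by
        have := hT P₀ hP₀
        rw [Ideal.IsPrime.prod_mem_iff]
        rintro ⟨P, hP, h⟩
        exact hxP P (Finset.mem_of_mem_erase hP) P₀
          (Finset.mem_erase.mpr ⟨(Finset.ne_of_mem_erase hP).symm, hP₀⟩) h
      refine ⟨n P₀ * m, Nat.mul_pos (hn _ hP₀) hm, u ^ n P₀ + x P₀ ^ m, add_mem ?_ ?_, ?_⟩
      · simpa using SetLike.pow_mem_graded (n P₀) hu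
      · simpa [mul_comm] using SetLike.pow_mem_graded m (hx P₀ hP₀)
      · intro P hP hmem
        have := hT P hP
        by_cases h : P = P₀
        · subst h
          have h1 : x P ^ m ∈ P := Ideal.pow_mem_of_mem _ (hall P hP) _ hm
          exact huP₀ (this.mem_of_pow_mem _ ((Ideal.add_mem_iff_left _ h1).mp hmem))
        · have hP' := Finset.mem_erase.mpr ⟨h, hP⟩
          have h1 : u ^ n P₀ ∈ P := Ideal.pow_mem_of_mem _ (huP P hP') _ (hn _ hP₀)
          exact hxP P₀ hP₀ P hP'
            (this.mem_of_pow_mem _ ((Ideal.add_mem_iff_right _ h1).mp hmem))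
    · push Not at hall
      obtain ⟨P, hP, hxPP⟩ := hall
      refine ⟨n P, hn P hP, x P, hx P hP, fun P' hP' => ?_⟩
      by_cases h : P' = P
      · rwa [h]
      · exact hxP P hP P' (Finset.mem_erase.mpr ⟨h, hP'⟩)

theorem exists_homogeneous_le_radical [IsNoetherianRing A] (M : Ideal A)
    (hM : ∀ I : Ideal A, I.IsHomogeneous 𝒜 → I ≠ ⊤ → I ≤ M) (hMtop : M ≠ ⊤)
    (hMpos : ∀ n > 0, ∀ x ∈ 𝒜 n, x ∈ M) (d : ℕ) (Q : Ideal A) (hQ : Q.IsHomogeneous 𝒜)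
    (hd : ∀ P : Ideal A, P.IsPrime → Q ≤ P → (∃ n > 0, ∃ x ∈ 𝒜 n, x ∉ P) →
      ringKrullDim (A ⧸ P) ≤ d) :
    ∃ s : Finset A, s.card ≤ d ∧ (∀ z ∈ s, ∃ n > 0, z ∈ 𝒜 n) ∧
      ∀ n > 0, ∀ x ∈ 𝒜 n, x ∈ (Q ⊔ Ideal.span (s : Set A)).radical := by
  classical
  induction d generalizing Q with
  | zero =>
    refine ⟨∅, le_rfl, by simp, fun n hn x hx => ?_⟩
    rw [Finset.coe_empty, Ideal.span_empty, sup_bot_eq, Ideal.radical_eq_sInf, Ideal.mem_sInf]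
    rintro P ⟨hQP, hP⟩
    by_contra hxP
    have hcore := hP.homogeneousCore (𝒜 := 𝒜)
    have hle := P.toIdeal_homogeneousCore_le 𝒜
    have hQc : Q ≤ (P.homogeneousCore 𝒜).toIdeal := by
      rw [← hQ.toIdeal_homogeneousCore_eq_self]
      exact Ideal.homogeneousCore_mono 𝒜 hQP
    have hdim := hd _ hcore hQc ⟨n, hn, x, hx, fun h => hxP (hle h)⟩
    have : Ring.KrullDimLE 0 (A ⧸ (P.homogeneousCore 𝒜).toIdeal) := by
      rw [Ring.krullDimLE_iff]; exact hdim
    have hmax : ((P.homogeneousCore 𝒜).toIdeal).IsMaximal :=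
      Ideal.Quotient.maximal_of_isField _ Ring.KrullDimLE.isField_of_isDomain
    have hcM := hM _ (P.homogeneousCore 𝒜).isHomogeneous hcore.ne_top
    rw [← hmax.eq_of_le hMtop hcM] at hMpos
    exact hxP (hle (hMpos n hn x hx))
  | succ d ih =>
    have hfin := Ideal.finite_minimalPrimes_of_isNoetherianRing A Q
    obtain ⟨n, hn, z, hz, hzT⟩ := exists_homogeneous_forall_notMem 𝒜
      (hfin.toFinset.filter fun P => ∃ n > 0, ∃ x ∈ 𝒜 n, x ∉ P)
      (fun P hP => by simp only [Finset.mem_filter, Set.Finite.mem_toFinset] at hP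
                      exact hP.1.1.1)
      (fun P hP => (Finset.mem_filter.mp hP).2)
    obtain ⟨s, hs, hsh, hsr⟩ := ih (Q ⊔ Ideal.span {z})
      (hQ.sup (Ideal.homogeneous_span 𝒜 _ (by rintro _ rfl; exact ⟨n, hz⟩))) (by
        rintro P hP hle ⟨m, hm, x, hx, hxP⟩
        obtain ⟨P₀, hP₀, hP₀P⟩ := Ideal.exists_minimalPrimes_le (le_sup_left.trans hle)
        have hzP₀ : z ∉ P₀ := hzT P₀ (by
          simpa [hP₀] using ⟨m, hm, x, hx, fun h => hxP (hP₀P h)⟩)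
        have := hP₀.1.1
        have h1 := ringKrullDim_succ_le_of_surjective (Ideal.Quotient.factor hP₀P)
          (Ideal.Quotient.factor_surjective hP₀P) (r := Ideal.Quotient.mk P₀ z)
          (mem_nonZeroDivisors_of_ne_zero (by rwa [Ne, Ideal.Quotient.eq_zero_iff_mem]))
          (by simpa [Ideal.Quotient.eq_zero_iff_mem] using
            hle (Ideal.mem_sup_right (Ideal.mem_span_singleton_self z)))
        have h2 := h1.trans (hd P₀ this hP₀.1.2 ⟨m, hm, x, hx, fun h => hxP (hP₀P h)⟩)
        rw [Nat.cast_succ] at h2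
        exact ENat.WithBot.add_le_add_one_right_iff.mp h2)
    refine ⟨insert z s, (Finset.card_insert_le _ _).trans (by omega), ?_, ?_⟩
    · intro y hy
      rcases Finset.mem_insert.mp hy with rfl | hy
      · exact ⟨n, hn, hz⟩
      · exact hsh y hy
    · rwa [Finset.coe_insert, Ideal.span_insert, ← sup_assoc]
end Graded

theorem length_le_of_ker_le {R M N P : Type*} [Ring R] [AddCommGroup M] [AddCommGroup N]
    [AddCommGroup P] [Module R M] [Module R N] [Module R P] (f : M →ₗ[R] N) (hf : Function.Surjective f)
    (g : M →ₗ[R] P) (h : LinearMap.ker g ≤ LinearMap.ker f) :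
    Module.length R N ≤ Module.length R P := by
  refine (Module.length_le_of_surjective ((LinearMap.ker g).liftQ f h) ?_).trans
    (Module.length_le_of_injective ((LinearMap.ker g).liftQ g le_rfl)
      (LinearMap.ker_eq_bot.mp (Submodule.ker_liftQ_eq_bot _ _ _ le_rfl)))
  intro y
  obtain ⟨m, rfl⟩ := hf y
  exact ⟨Submodule.Quotient.mk m, rfl⟩

section FiberCone
variable {R σ : Type*} [CommRing R]

/-- The presentation `X j ↦ x j * T` of the Rees algebra of the ideal generated by `x`. -/
noncomputable def reesMap (x : σ → R) : MvPolynomial σ R →ₐ[R] Polynomial R :=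
  MvPolynomial.aeval fun j => Polynomial.C (x j) * Polynomial.X

theorem reesMap_monomial (x : σ → R) (s : σ →₀ ℕ) (c : R) :
    reesMap x (MvPolynomial.monomial s c) =
      Polynomial.monomial s.degree (MvPolynomial.eval x (MvPolynomial.monomial s c)) := by
  rw [reesMap, MvPolynomial.aeval_monomial, MvPolynomial.eval_monomial,
    ← Polynomial.C_mul_X_pow_eq_monomial, map_mul, mul_assoc, Polynomial.algebraMap_eq]
  congr 1
  simp only [mul_pow, Finsupp.prod, Finset.prod_mul_distrib, map_prod, map_pow,
    Finset.prod_pow_eq_pow_sum]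
  rfl

theorem reesMap_of_isHomogeneous (x : σ → R) {f : MvPolynomial σ R} {n : ℕ}
    (hf : f.IsHomogeneous n) :
    reesMap x f = Polynomial.monomial n (MvPolynomial.eval x f) := by
  conv_lhs => rw [f.as_sum]
  conv_rhs => rw [f.as_sum]
  rw [map_sum, map_sum, map_sum]
  refine Finset.sum_congr rfl fun s hs => ?_
  rw [reesMap_monomial, hf.degree_eq_sum_deg_support hs]
  rfl

theorem coeff_reesMap (x : σ → R) (f : MvPolynomial σ R) (n : ℕ) :
    (reesMap x f).coeff n =
      MvPolynomial.eval x (MvPolynomial.homogeneousComponent n f) := by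
  conv_lhs => rw [← MvPolynomial.sum_homogeneousComponent f]
  rw [map_sum, Polynomial.finsetSum_coeff]
  simp_rw [reesMap_of_isHomogeneous x (MvPolynomial.homogeneousComponent_isHomogeneous _ f),
    Polynomial.coeff_monomial]
  rw [Finset.sum_ite_eq' (Finset.range (f.totalDegree + 1)) n]
  split_ifs with h
  · rfl
  · rw [MvPolynomial.homogeneousComponent_eq_zero, map_zero]
    simpa [Nat.lt_succ_iff] using h

theorem coeff_reesMap_mem (x : σ → R) (f : MvPolynomial σ R) (n : ℕ) :
    (reesMap x f).coeff n ∈ Ideal.span (Set.range x) ^ n := by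
  rw [coeff_reesMap, Ideal.mem_span_pow_iff_exists_isHomogeneous]
  exact ⟨_, MvPolynomial.homogeneousComponent_isHomogeneous n f, rfl⟩

variable [IsLocalRing R]

/-- The ideal of relations of the fibre cone of the ideal generated by `x`. -/
noncomputable def fiberIdeal (x : σ → R) : Ideal (MvPolynomial σ R) where
  carrier := {f | ∀ n, (reesMap x f).coeff n ∈ maximalIdeal R * Ideal.span (Set.range x) ^ n}
  add_mem' hf hg n := by
    rw [map_add, Polynomial.coeff_add]
    exact add_mem (hf n) (hg n)
  zero_mem' n := by simp
  smul_mem' g f hf n := by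
    rw [smul_eq_mul, map_mul, Polynomial.coeff_mul]
    refine sum_mem fun p hp => ?_
    rw [← Finset.HasAntidiagonal.mem_antidiagonal.mp hp, pow_add, ← mul_assoc, mul_comm (maximalIdeal R),
      mul_assoc]
    exact Ideal.mul_mem_mul (coeff_reesMap_mem x g _) (hf _)

theorem homogeneousComponent_mem_fiberIdeal {x : σ → R} {f : MvPolynomial σ R}
    (hf : f ∈ fiberIdeal x) (i : ℕ) : MvPolynomial.homogeneousComponent i f ∈ fiberIdeal x := by
  intro n
  rw [reesMap_of_isHomogeneous x (MvPolynomial.homogeneousComponent_isHomogeneous i f),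
    Polynomial.coeff_monomial]
  split_ifs with h
  · rw [← coeff_reesMap, h]; exact hf n
  · exact zero_mem _

theorem C_mem_fiberIdeal (x : σ → R) {r : R} (hr : r ∈ maximalIdeal R) :
    MvPolynomial.C r ∈ fiberIdeal x := by
  intro n
  rw [reesMap_of_isHomogeneous x (MvPolynomial.isHomogeneous_C σ r), Polynomial.coeff_monomial]
  split_ifs with h
  · subst h; simpa using hr
  · exact zero_mem _

theorem fiberIdeal_ne_top (x : σ → R) : fiberIdeal x ≠ ⊤ := by
  rw [Ideal.ne_top_iff_one]
  intro h
  have := h 0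
  simp at this

theorem length_map_restrictTotalDegree_le (x : σ → R) (N : ℕ) :
    Module.length R ((MvPolynomial.restrictTotalDegree σ R N).map
      (Ideal.Quotient.mkₐ R (fiberIdeal x)).toLinearMap) ≤
      ∑ k ∈ Finset.range (N + 1), fiberLength (Ideal.span (Set.range x)) k := by
  set a := Ideal.span (Set.range x)
  let c : ∀ k : ℕ, MvPolynomial σ R →ₗ[R] ↥(a ^ k) := fun k =>
    LinearMap.codRestrict (a ^ k) (Polynomial.lcoeff R k ∘ₗ (reesMap x).toLinearMap)
      (fun f => coeff_reesMap_mem x f k)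
  let W := MvPolynomial.restrictTotalDegree σ R N
  let ψ : W →ₗ[R] ∀ k : Fin (N + 1),
      ↥(a ^ (k : ℕ)) ⧸ Submodule.comap (a ^ (k : ℕ)).subtype (maximalIdeal R * a ^ (k : ℕ)) :=
    LinearMap.pi fun k => Submodule.mkQ _ ∘ₗ c k ∘ₗ W.subtype
  have h := length_le_of_ker_le
    ((Ideal.Quotient.mkₐ R (fiberIdeal x)).toLinearMap.submoduleMap W)
    (LinearMap.submoduleMap_surjective _ _) ψ (by
      rintro ⟨f, hf⟩ hψ
      rw [LinearMap.mem_ker] at hψ ⊢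
      ext
      change Ideal.Quotient.mk (fiberIdeal x) f = 0
      rw [Ideal.Quotient.eq_zero_iff_mem]
      intro n
      by_cases hn : n < N + 1
      · have := congrFun hψ ⟨n, hn⟩
        exact (Submodule.Quotient.mk_eq_zero (Submodule.comap (a ^ n).subtype _)).mp this
      · rw [coeff_reesMap, MvPolynomial.homogeneousComponent_eq_zero]
        · simp
        · have := (MvPolynomial.mem_restrictTotalDegree σ N f).mp hf
          omega)
  refine h.trans_eq ?_
  rw [Module.length_pi_of_fintype, Finset.sum_range]
  rfl

theorem ringKrullDim_quotient_fiberIdeal_le [Finite σ] (x : σ → R) (C d : ℕ)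
    (hC : ∀ n : ℕ, ∑ k ∈ Finset.range n, fiberLength (Ideal.span (Set.range x)) k ≤
      C * ((n : ℕ∞) + 1) ^ d) :
    ringKrullDim (MvPolynomial σ R ⧸ fiberIdeal x) ≤ d := by
  set B := MvPolynomial σ R ⧸ fiberIdeal x
  have : Nontrivial B := Ideal.Quotient.nontrivial_iff.mpr (fiberIdeal_ne_top x)
  let _ : Field (R ⧸ maximalIdeal R) := Ideal.Quotient.field _
  let _ : Algebra (R ⧸ maximalIdeal R) B :=
    (Ideal.Quotient.lift (maximalIdeal R) (algebraMap R B) fun r hr =>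
      Ideal.Quotient.eq_zero_iff_mem.mpr (C_mem_fiberIdeal x hr)).toAlgebra
  have : IsScalarTower R (R ⧸ maximalIdeal R) B := IsScalarTower.of_algebraMap_eq fun r => rfl
  have : Algebra.FiniteType (R ⧸ maximalIdeal R) B :=
    Algebra.FiniteType.of_restrictScalars_finiteType R _ _
  let U : ℕ → Submodule R B := fun N => (MvPolynomial.restrictTotalDegree σ R N).map
    (Ideal.Quotient.mkₐ R (fiberIdeal x)).toLinearMap
  let V : ℕ → Submodule (R ⧸ maximalIdeal R) B := fun N =>
    { U N with
      smul_mem' := by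
        intro c y hy
        obtain ⟨r, rfl⟩ := Ideal.Quotient.mk_surjective c
        have h : Ideal.Quotient.mk (maximalIdeal R) r • y = r • y :=
          algebraMap_smul (R ⧸ maximalIdeal R) r y
        rw [h]
        exact (U N).smul_mem r hy }
  have hmem : ∀ N y, y ∈ V N ↔ ∃ f : MvPolynomial σ R, f.totalDegree ≤ N ∧
      Ideal.Quotient.mk (fiberIdeal x) f = y := by
    intro N y
    change y ∈ U N ↔ _
    simp only [U, Submodule.mem_map, MvPolynomial.mem_restrictTotalDegree]
    rfl
  refine ringKrullDim_le_of_filtration_growth V ?_ ?_ ?_ ?_ (C * 2 ^ d) d ?_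
  · intro i j hij y hy
    obtain ⟨f, hf, rfl⟩ := (hmem i y).mp hy
    exact (hmem j _).mpr ⟨f, hf.trans hij, rfl⟩
  · exact (hmem 0 _).mpr ⟨1, by simp, rfl⟩
  · intro i j y z hy hz
    obtain ⟨f, hf, rfl⟩ := (hmem i y).mp hy
    obtain ⟨g, hg, rfl⟩ := (hmem j z).mp hz
    exact (hmem _ _).mpr ⟨f * g, (MvPolynomial.totalDegree_mul f g).trans (add_le_add hf hg),
      rfl⟩
  · intro y
    obtain ⟨f, rfl⟩ := Ideal.Quotient.mk_surjective y
    exact ⟨f.totalDegree, (hmem _ _).mpr ⟨f, le_rfl, rfl⟩⟩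
  · intro n
    have h1 : Module.length (R ⧸ maximalIdeal R) (V n) = Module.length R (U n) := by
      rw [← Module.length_eq_of_surjective (S := R) (R := R ⧸ maximalIdeal R) (M := V n)
        Ideal.Quotient.mk_surjective]
      exact LinearEquiv.length_eq
        { toFun := fun y => ⟨y.1, y.2⟩, invFun := fun y => ⟨y.1, y.2⟩,
          map_add' := fun _ _ => rfl, map_smul' := fun _ _ => rfl,
          left_inv := fun _ => rfl, right_inv := fun _ => rfl }
    rw [h1]
    refine (length_map_restrictTotalDegree_le x n).trans ((hC (n + 1)).trans ?_)
    have h2 : ((n + 1 : ℕ) : ℕ∞) + 1 ≤ 2 * ((n : ℕ∞) + 1) := by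
      exact_mod_cast (by omega : n + 1 + 1 ≤ 2 * (n + 1))
    calc (C : ℕ∞) * (((n + 1 : ℕ) : ℕ∞) + 1) ^ d ≤ C * (2 * ((n : ℕ∞) + 1)) ^ d := by gcongr
      _ = _ := by rw [mul_pow]; push_cast; ring

end FiberCone

theorem exists_isHomogeneous_radical_fiberIdeal {R σ : Type*} [CommRing R] [IsNoetherianRing R]
    [IsLocalRing R] [Finite σ] (x : σ → R) (d : ℕ)
    (hd : ringKrullDim (MvPolynomial σ R ⧸ fiberIdeal x) ≤ d) :
    ∃ s : Finset (MvPolynomial σ R), s.card ≤ d ∧ (∀ z ∈ s, ∃ n > 0, z.IsHomogeneous n) ∧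
      ∀ j, MvPolynomial.X j ∈
        (fiberIdeal x ⊔ Ideal.span (s : Set (MvPolynomial σ R))).radical := by
  let _ := MvPolynomial.gradedAlgebra (σ := σ) (R := R)
  suffices h : ∃ s : Finset (MvPolynomial σ R), s.card ≤ d ∧
      (∀ z ∈ s, ∃ n > 0, z ∈ MvPolynomial.homogeneousSubmodule σ R n) ∧
      ∀ n > 0, ∀ f ∈ MvPolynomial.homogeneousSubmodule σ R n,
        f ∈ (fiberIdeal x ⊔ Ideal.span (s : Set (MvPolynomial σ R))).radical by
    obtain ⟨s, hs, hsh, hsr⟩ := h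
    exact ⟨s, hs, hsh, fun j => hsr 1 one_pos _ (MvPolynomial.isHomogeneous_X R j)⟩
  refine exists_homogeneous_le_radical (MvPolynomial.homogeneousSubmodule σ R)
    ((maximalIdeal R).comap MvPolynomial.constantCoeff) ?_ ?_ ?_ d (fiberIdeal x) ?_ ?_
  · intro I hI hItop f hf
    rw [Ideal.mem_comap, mem_maximalIdeal, mem_nonunits_iff]
    intro hu
    have h0 := MvPolynomial.homogeneousComponent_mem_of_mem hI hf 0
    rw [MvPolynomial.homogeneousComponent_zero] at h0
    exact hItop (Ideal.eq_top_of_isUnit_mem _ h0 (hu.map MvPolynomial.C))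
  · exact Ideal.comap_ne_top _ (maximalIdeal.isMaximal R).ne_top
  · intro n hn f hf
    have h0 : MvPolynomial.constantCoeff f = 0 :=
      MvPolynomial.IsHomogeneous.coeff_eq_zero (d := 0) hf (by simpa using hn.ne)
    rw [Ideal.mem_comap, h0]
    exact zero_mem _
  · intro i f hf
    have := homogeneousComponent_mem_fiberIdeal hf i
    rwa [← MvPolynomial.decomposition.decompose'_apply] at this
  · intro P _ hP _
    exact (ringKrullDim_le_of_surjective (Ideal.Quotient.factor hP)
      (Ideal.Quotient.factor_surjective hP)).trans hd

theorem exists_finset_le_radical_of_growth {R : Type*} [CommRing R] [IsNoetherianRing R]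
    [IsLocalRing R] (a : Ideal R) (C d : ℕ)
    (hC : ∀ n : ℕ, ∑ k ∈ Finset.range n, fiberLength a k ≤ C * ((n : ℕ∞) + 1) ^ d) :
    ∃ s : Finset R, s.card ≤ d ∧ (s : Set R) ⊆ a ∧ a ≤ (Ideal.span (s : Set R)).radical := by
  classical
  obtain ⟨t, rfl⟩ := IsNoetherian.noetherian a
  change ∀ n : ℕ, ∑ k ∈ Finset.range n, fiberLength (Ideal.span (t : Set R)) k ≤ _ at hC
  change ∃ s : Finset R, s.card ≤ d ∧ (s : Set R) ⊆ Ideal.span (t : Set R) ∧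
    Ideal.span (t : Set R) ≤ (Ideal.span (s : Set R)).radical
  set x : t → R := Subtype.val
  have hx : (t : Set R) = Set.range x := by simp [x]
  rw [hx] at hC ⊢
  set a := Ideal.span (Set.range x)
  obtain ⟨s, hs, hsh, hsr⟩ := exists_isHomogeneous_radical_fiberIdeal x d
    (ringKrullDim_quotient_fiberIdeal_le x C d hC)
  set J := Ideal.span ((s.image (MvPolynomial.eval x) : Finset R) : Set R)
  set K := fiberIdeal x ⊔ Ideal.span (s : Set (MvPolynomial t R))
  refine ⟨s.image (MvPolynomial.eval x), Finset.card_image_le.trans hs, ?_, ?_⟩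
  · intro y hy
    obtain ⟨z, hz, rfl⟩ := Finset.mem_image.mp (Finset.mem_coe.mp hy)
    obtain ⟨n, hn, hzn⟩ := hsh z hz
    exact Ideal.pow_le_self hn.ne' ((Ideal.mem_span_pow_iff_exists_isHomogeneous x _).mpr
      ⟨z, hzn, rfl⟩)
  · obtain ⟨N, hN⟩ := K.exists_radical_pow_le_of_fg (IsNoetherian.noetherian _)
    have hXK : Ideal.span (Set.range (MvPolynomial.X : t → MvPolynomial t R)) ^ N ≤ K := by
      refine (Ideal.pow_right_mono (Ideal.span_le.mpr ?_) N).trans hN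
      rintro _ ⟨j, rfl⟩
      exact hsr j
    have hsJ : Ideal.span (s : Set (MvPolynomial t R)) ≤
        (J.map Polynomial.C).comap (reesMap x).toRingHom := by
      rw [Ideal.span_le]
      intro z hz
      obtain ⟨n, -, hzn⟩ := hsh z hz
      change reesMap x z ∈ J.map Polynomial.C
      rw [reesMap_of_isHomogeneous x hzn, Ideal.mem_map_C_iff]
      intro m
      rw [Polynomial.coeff_monomial]
      split_ifs
      · exact Ideal.subset_span (Finset.mem_coe.mpr (Finset.mem_image_of_mem _ hz))
      · exact zero_mem _
    have hle : a ^ N ≤ J ⊔ maximalIdeal R • a ^ N := by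
      intro y hy
      obtain ⟨f, hf, rfl⟩ := (Ideal.mem_span_pow_iff_exists_isHomogeneous x y).mp hy
      have hfX : f ∈ Ideal.span (Set.range (MvPolynomial.X : t → MvPolynomial t R)) ^ N := by
        rw [Ideal.mem_span_pow_iff_exists_isHomogeneous]
        exact ⟨MvPolynomial.map MvPolynomial.C f, hf.map _, by
          rw [MvPolynomial.eval_map, MvPolynomial.eval₂_eta]⟩
      obtain ⟨q, hq, w, hw, hqw⟩ := Submodule.mem_sup.mp (hXK hfX)
      have hcoeff : MvPolynomial.eval x f =
          (reesMap x w).coeff N + (reesMap x q).coeff N := by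
        rw [← Polynomial.coeff_add, ← map_add, add_comm w, hqw, reesMap_of_isHomogeneous x hf,
          Polynomial.coeff_monomial_same]
      rw [hcoeff]
      exact add_mem (Ideal.mem_sup_left (Ideal.mem_map_C_iff.mp (hsJ hw) N))
        (Ideal.mem_sup_right (hq N))
    have hJ : a ^ N ≤ J := Submodule.le_of_le_smul_of_le_jacobson_bot
      (IsNoetherian.noetherian _) (IsLocalRing.maximalIdeal_le_jacobson _) hle
    exact fun y hy => ⟨N, hJ (Ideal.pow_mem_pow hy N)⟩

theorem ringKrullDim_quotient_le_of_le_radical {R : Type*} [CommRing R] {I J : Ideal R}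
    (h : I ≤ J.radical) : ringKrullDim (R ⧸ J) ≤ ringKrullDim (R ⧸ I) := by
  rw [ringKrullDim_quotient, ringKrullDim_quotient]
  refine Order.krullDim_le_of_strictMono
    (fun p => ⟨p.1, fun y hy => (p.1.2.radical_le_iff.mpr p.2) (h hy)⟩) fun p q hpq => hpq

theorem ringKrullDim_quotient_le_quotient_sup_add_card {R : Type*} [CommRing R]
    [IsNoetherianRing R] [IsLocalRing R] (I : Ideal R) (s : Finset R)
    (hs : (s : Set R) ⊆ maximalIdeal R) :
    ringKrullDim (R ⧸ I) ≤ ringKrullDim (R ⧸ (I ⊔ Ideal.span (s : Set R))) + s.card := by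
  classical
  by_cases hI : I = ⊤
  · have : Subsingleton (R ⧸ I) := Ideal.Quotient.subsingleton_iff.mpr hI
    rw [ringKrullDim_eq_bot_of_subsingleton]
    exact bot_le
  have : Nontrivial (R ⧸ I) := Ideal.Quotient.nontrivial_iff.mpr hI
  have : IsLocalRing (R ⧸ I) :=
    IsLocalRing.of_surjective' (Ideal.Quotient.mk _) Ideal.Quotient.mk_surjective
  have : IsLocalHom (Ideal.Quotient.mk I) := IsLocalHom.of_surjective _ Ideal.Quotient.mk_surjective
  have h := ringKrullDim_le_ringKrullDim_quotient_add_card (s.image (Ideal.Quotient.mk I)) (by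
    rw [IsLocalRing.ringJacobson_eq_maximalIdeal]
    intro y hy
    obtain ⟨z, hz, rfl⟩ := Finset.mem_image.mp (Finset.mem_coe.mp hy)
    have := hs hz
    rwa [← maximalIdeal_comap (Ideal.Quotient.mk I)] at this)
  rw [Finset.coe_image, ← Ideal.map_span,
    ringKrullDim_eq_of_ringEquiv (DoubleQuot.quotQuotEquivQuotSup I (Ideal.span (s : Set R)))] at h
  refine h.trans ?_
  gcongr
  exact Finset.card_image_le

theorem ringKrullDim_quotient_le_of_growth {R : Type*} [CommRing R] [IsNoetherianRing R]
    [IsLocalRing R] (a : Ideal R) (ha : a ≤ maximalIdeal R) (C d : ℕ)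
    (hC : ∀ n : ℕ, ∑ k ∈ Finset.range n, fiberLength a k ≤ C * ((n : ℕ∞) + 1) ^ d)
    (I : Ideal R) : ringKrullDim (R ⧸ I) ≤ ringKrullDim (R ⧸ (I ⊔ a)) + d := by
  obtain ⟨s, hsd, hsa, hs⟩ := exists_finset_le_radical_of_growth a C d hC
  refine (ringKrullDim_quotient_le_quotient_sup_add_card I s (hsa.trans ha)).trans ?_
  refine add_le_add (ringKrullDim_quotient_le_of_le_radical (sup_le ?_ ?_)) (by exact_mod_cast hsd)
  · exact le_sup_left.trans Ideal.le_radical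
  · exact hs.trans (Ideal.radical_mono le_sup_right)

theorem exists_forall_le_mul_pow_of_eventually_le_eval (u : ℕ → ℕ) (g : Polynomial ℚ) (e : ℕ)
    (hg : g.natDegree ≤ e) (h : ∀ᶠ n : ℕ in atTop, (u n : ℚ) ≤ g.eval (n : ℚ)) :
    ∃ C : ℕ, ∀ n, u n ≤ C * (n + 1) ^ e := by
  obtain ⟨n₀, hn₀⟩ := eventually_atTop.mp h
  set c := ∑ i ∈ Finset.range (e + 1), |g.coeff i|
  have hc : ∀ n : ℕ, g.eval (n : ℚ) ≤ c * (n + 1) ^ e := by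
    intro n
    rw [Polynomial.eval_eq_sum_range' (Nat.lt_succ_of_le hg), Finset.sum_mul]
    refine Finset.sum_le_sum fun i hi => ?_
    have h1 : (1 : ℚ) ≤ n + 1 := by simp
    have h2 : (n : ℚ) ^ i ≤ ((n : ℚ) + 1) ^ e :=
      (pow_le_pow_left₀ (Nat.cast_nonneg n) (by simp) i).trans
        (pow_le_pow_right₀ h1 (Nat.lt_succ_iff.mp (Finset.mem_range.mp hi)))
    exact mul_le_mul (le_abs_self _) h2 (by positivity) (abs_nonneg _)
  refine ⟨∑ k ∈ Finset.range n₀, u k + ⌈c⌉₊, fun n => ?_⟩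
  rw [add_mul]
  rcases lt_or_ge n n₀ with hn | hn
  · calc u n ≤ ∑ k ∈ Finset.range n₀, u k :=
          Finset.single_le_sum (fun _ _ => Nat.zero_le _) (Finset.mem_range.mpr hn)
      _ ≤ (∑ k ∈ Finset.range n₀, u k) * (n + 1) ^ e :=
          Nat.le_mul_of_pos_right _ (by positivity)
      _ ≤ _ := Nat.le_add_right _ _
  · refine le_trans ?_ (Nat.le_add_left _ _)
    have h1 : (u n : ℚ) ≤ ⌈c⌉₊ * (n + 1) ^ e :=
      (hn₀ n hn).trans ((hc n).trans (by gcongr; exact Nat.le_ceil c))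
    exact_mod_cast h1

theorem exists_sum_fiberLength_le_of_minGen_le_eval {R : Type*} [CommRing R] [IsNoetherianRing R]
    [IsLocalRing R] (a : Ideal R) (g : Polynomial ℚ) (e : ℕ) (hg : g.natDegree ≤ e)
    (h : ∀ᶠ n : ℕ in atTop, (minGen R ↥(a ^ n) : ℚ) ≤ g.eval (n : ℚ)) :
    ∃ C : ℕ, ∀ n : ℕ,
      ∑ k ∈ Finset.range n, fiberLength a k ≤ C * ((n : ℕ∞) + 1) ^ (e + 1) := by
  obtain ⟨C, hC⟩ := exists_forall_le_mul_pow_of_eventually_le_eval _ g e hg h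
  refine ⟨C, fun n => ?_⟩
  have h1 : ∑ k ∈ Finset.range n, minGen R ↥(a ^ k) ≤ C * (n + 1) ^ (e + 1) := by
    calc ∑ k ∈ Finset.range n, minGen R ↥(a ^ k) ≤ ∑ _k ∈ Finset.range n, C * (n + 1) ^ e :=
          Finset.sum_le_sum fun k hk => (hC k).trans (by
            have := Finset.mem_range.mp hk
            gcongr)
      _ = n * (C * (n + 1) ^ e) := by simp
      _ ≤ (n + 1) * (C * (n + 1) ^ e) := Nat.mul_le_mul_right _ (Nat.le_succ n)
      _ = C * (n + 1) ^ (e + 1) := by ring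
  calc ∑ k ∈ Finset.range n, fiberLength a k
      ≤ ((∑ k ∈ Finset.range n, minGen R ↥(a ^ k) : ℕ) : ℕ∞) := by
        push_cast
        exact Finset.sum_le_sum fun k _ => fiberLength_le_minGen a k
    _ ≤ ((C * (n + 1) ^ (e + 1) : ℕ) : ℕ∞) := by exact_mod_cast h1
    _ = _ := by push_cast; rfl

theorem eq_bot_of_idealHeight_eq_zero {R : Type*} [CommRing R] [IsDomain R] {a : Ideal R}
    (ha : idealHeight a = 0) : a = ⊥ := by
  have hex : ∃ p : {p : PrimeSpectrum R // a ≤ p.asIdeal}, Order.height p.1 = 0 := by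
    by_contra! h
    have : (1 : ℕ∞) ≤ idealHeight a := le_iInf fun p => Order.one_le_iff_ne_zero.mpr (h p)
    simp [ha] at this
  obtain ⟨⟨p, hap⟩, hp⟩ := hex
  have hmin : IsMin p := Order.height_eq_zero.mp hp
  have : p ≤ ⊥ := hmin bot_le
  exact le_bot_iff.mp (hap.trans this)

/-- Let `(R, m)` be a regular local ring (noetherian local with maximal
ideal generated by `dim R` elements) and `a`, `b` ideals with `√(a + b) = m`.  Suppose `a`
is equimultiple — i.e. its analytic spread equals its height `h`, expressed here by
`μ(a^n)` being bounded above and below by polynomials of degree `h − 1` for large `n` —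
and `b ∩ a^n ⊆ m·a^n` for all large `n`.  Then `dim(R/a) + dim(R/b) = dim R`. -/
theorem stmt10 (R : Type*) [CommRing R] [IsNoetherianRing R] [IsLocalRing R]
    (hreg : ∃ s : Finset R, (s.card : WithBot ℕ∞) = ringKrullDim R ∧
      Ideal.span (s : Set R) = IsLocalRing.maximalIdeal R)
    (a b : Ideal R)
    (hrad : (a + b).radical = IsLocalRing.maximalIdeal R)
    (h : ℕ) (hh : (h : ℕ∞) = idealHeight a)
    (hequi : ∃ f g : Polynomial ℚ, f.degree = (h - 1 : ℕ) ∧ g.degree = (h - 1 : ℕ) ∧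
      ∀ᶠ n : ℕ in atTop,
        f.eval (n : ℚ) ≤ (minGen R ↥(a ^ n) : ℚ) ∧ (minGen R ↥(a ^ n) : ℚ) ≤ g.eval (n : ℚ))
    (hb : ∀ᶠ n : ℕ in atTop, b ⊓ a ^ n ≤ IsLocalRing.maximalIdeal R * a ^ n) :
    ringKrullDim (R ⧸ a) + ringKrullDim (R ⧸ b) = ringKrullDim R := by
  rw [Submodule.add_eq_sup] at hrad
  have ha : a ≤ maximalIdeal R := hrad ▸ le_sup_left.trans Ideal.le_radical
  have hbm : b ≤ maximalIdeal R := hrad ▸ le_sup_right.trans Ideal.le_radical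
  have hdim_sup : ringKrullDim (R ⧸ (b ⊔ a)) ≤ 0 := by
    refine (ringKrullDim_quotient_le_of_le_radical
      (I := maximalIdeal R) (sup_comm a b ▸ hrad.ge)).trans ?_
    let _ : Field (R ⧸ maximalIdeal R) := Ideal.Quotient.field _
    exact ringKrullDim_eq_zero_of_field _ |>.le
  rcases Nat.eq_zero_or_pos h with rfl | hpos
  · obtain ⟨s, hs, hspan⟩ := hreg
    have := isDomain_of_span_card_le _ R s le_rfl hs.le hspan
    obtain rfl := eq_bot_of_idealHeight_eq_zero hh.symm
    rw [sup_bot_eq] at hdim_sup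
    have : Nontrivial (R ⧸ b) := Ideal.Quotient.nontrivial_iff.mpr
      (ne_top_of_le_ne_top (maximalIdeal.isMaximal R).ne_top hbm)
    rw [le_antisymm hdim_sup ringKrullDim_nonneg_of_nontrivial, add_zero]
    exact ringKrullDim_eq_of_ringEquiv (RingEquiv.quotientBot R)
  obtain ⟨_, g, _, hg, hfg⟩ := hequi
  obtain ⟨C, hC⟩ := exists_sum_fiberLength_le_of_minGen_le_eval a g (h - 1)
    (Polynomial.natDegree_le_of_degree_le hg.le) (hfg.mono fun n hn => hn.2)
  rw [Nat.sub_add_cancel hpos] at hC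
  have hb_le : ringKrullDim (R ⧸ b) ≤ h := by
    refine (ringKrullDim_quotient_le_of_growth a ha C h hC b).trans ?_
    calc ringKrullDim (R ⧸ (b ⊔ a)) + h ≤ 0 + h := by gcongr
      _ = h := zero_add _
  obtain ⟨d, hd⟩ : ∃ d : ℕ, ringKrullDim (R ⧸ b) = d := by
    have : Nontrivial (R ⧸ b) := Ideal.Quotient.nontrivial_iff.mpr
      (ne_top_of_le_ne_top (maximalIdeal.isMaximal R).ne_top hbm)
    have h0 := ringKrullDim_nonneg_of_nontrivial (R := R ⧸ b)
    generalize ringKrullDim (R ⧸ b) = D at hb_le h0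
    induction D with
    | bot => simp at h0
    | coe D =>
      have : D ≤ h := by exact_mod_cast hb_le
      obtain ⟨d, rfl⟩ := ENat.ne_top_iff_exists.mp (ne_top_of_le_ne_top (ENat.natCast_ne_top h) this)
      exact ⟨d, rfl⟩
  obtain ⟨C', hC'⟩ := exists_sum_fiberLength_le a b hrad hb d hd
  refine le_antisymm ?_ ?_
  · calc ringKrullDim (R ⧸ a) + ringKrullDim (R ⧸ b) ≤ ringKrullDim (R ⧸ a) + h := by gcongr
      _ ≤ ringKrullDim R := ringKrullDim_quotient_add_le a h fun p hp =>
          hh.le.trans (iInf_le _ (⟨p, hp⟩ : {p : PrimeSpectrum R // a ≤ p.asIdeal}))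
  · have := ringKrullDim_quotient_le_of_growth a ha C' d hC' ⊥
    rwa [bot_sup_eq, ringKrullDim_eq_of_ringEquiv (RingEquiv.quotientBot R), ← hd] at this
end

section
/- Let R be a commutative ring, a = (g₁, ..., g_t) a finitely generated ideal, and L a finitely generated R-module with presentation R^{β₁} → R^{β₀} → L → 0 given by a matrix φ. Then the block matrix (φ | g₁·I_{β₀} | ... | g_t·I_{β₀}), where I_{β₀} is the β₀ × β₀ identity matrix, is a presentation matrix of L/aL as an R-module, and Fitt₀(L/aL) = Σ_{j=0}^{β₀} a^j · Fitt_j(L). -/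
/-- The `j`-th Fitting ideal of a module `M`, defined intrinsically as the ideal generated by
all `(n-j)`-minors of matrices of relations coming from any surjection `R^n → M`.
(This agrees with the classical definition via a presentation matrix, including the
convention `Fitt_j = R` for `j ≥ n`, since the `0 × 0` determinant is `1`.) -/
noncomputable def fittingIdeal (R : Type*) [CommRing R] (M : Type*) [AddCommGroup M]
    [Module R M] (j : ℕ) : Ideal R :=
  Ideal.span { r | ∃ (n : ℕ) (π : (Fin n → R) →ₗ[R] M), Function.Surjective π ∧
    ∃ v : Fin (n - j) → (Fin n → R), (∀ l, v l ∈ LinearMap.ker π) ∧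
      ∃ rows : Fin (n - j) → Fin n,
        r = Matrix.det (Matrix.of fun p q : Fin (n - j) => v q (rows p)) }

/-- A multilinear map sends tuples of elements of the spans of sets `B i` into any submodule
containing its values on tuples of elements of the `B i`. -/
theorem MultilinearMap.map_mem_of_mem_span {R ι M N : Type*} [CommRing R] [Finite ι]
    [AddCommGroup M] [Module R M] [AddCommGroup N] [Module R N]
    (f : MultilinearMap R (fun _ : ι => M) N) (B : ι → Set M) (J : Submodule R N)
    (h : ∀ x : ι → M, (∀ i, x i ∈ B i) → f x ∈ J)
    (x : ι → M) (hx : ∀ i, x i ∈ Submodule.span R (B i)) : f x ∈ J := by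
  classical
  cases nonempty_fintype ι
  suffices H : ∀ (s : Finset ι) (x : ι → M), (∀ i ∈ s, x i ∈ Submodule.span R (B i)) →
      (∀ i ∉ s, x i ∈ B i) → f x ∈ J from
    H Finset.univ x (fun i _ => hx i) (fun i hi => absurd (Finset.mem_univ i) hi)
  intro s
  induction s using Finset.induction_on with
  | empty => exact fun x _ hx => h x fun i => hx i (Finset.notMem_empty i)
  | insert i s his ih =>
    intro x hs hns
    have key : ∀ y ∈ Submodule.span R (B i), f (Function.update x i y) ∈ J := by
      intro y hy
      induction hy using Submodule.span_induction with
      | mem y hy =>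
        refine ih _ (fun l hl => ?_) (fun l hl => ?_)
        · have hli : l ≠ i := fun e => his (e ▸ hl)
          simpa [hli] using hs l (Finset.mem_insert_of_mem hl)
        · by_cases hli : l = i
          · subst hli; simpa using hy
          · simpa [hli] using hns l (by simp [hli, hl])
      | zero => rw [f.map_update_zero]; exact J.zero_mem
      | add y z _ _ hy hz => rw [f.map_update_add]; exact J.add_mem hy hz
      | smul c y _ hy => rw [f.map_update_smul]; exact J.smul_mem c hy
    simpa using key (x i) (hs i (Finset.mem_insert_self i s))

/-- The map `ℓ ↦ det (ℓ p (v q))`, multilinear in the functionals `ℓ p`. -/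
noncomputable def detFunctionals {R V : Type*} [CommRing R] [AddCommGroup V] [Module R V] {m : ℕ}
    (v : Fin m → V) : MultilinearMap R (fun _ : Fin m => V →ₗ[R] R) R :=
  (Matrix.detRowAlternating (R := R) (n := Fin m)).toMultilinearMap.compLinearMap
    fun _ => LinearMap.pi fun q => LinearMap.applyₗ (v q)

theorem detFunctionals_apply {R V : Type*} [CommRing R] [AddCommGroup V] [Module R V] {m : ℕ}
    (v : Fin m → V) (ℓ : Fin m → V →ₗ[R] R) :
    detFunctionals v ℓ = (Matrix.of fun p q => ℓ p (v q)).det := rfl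

/-- The map `v ↦ det (ℓ p (v q))`, multilinear in the vectors `v q`. -/
noncomputable def detVectors {R V : Type*} [CommRing R] [AddCommGroup V] [Module R V] {m : ℕ}
    (ℓ : Fin m → V →ₗ[R] R) : MultilinearMap R (fun _ : Fin m => V) R :=
  (Matrix.detRowAlternating (R := R) (n := Fin m)).toMultilinearMap.compLinearMap
    fun _ => LinearMap.pi ℓ

theorem detVectors_apply {R V : Type*} [CommRing R] [AddCommGroup V] [Module R V] {m : ℕ}
    (ℓ : Fin m → V →ₗ[R] R) (v : Fin m → V) :
    detVectors ℓ v = (Matrix.of fun p q => ℓ p (v q)).det :=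
  Matrix.det_transpose (Matrix.of fun p q => ℓ p (v q))

/-- The ideal generated by the determinants `det (ℓ p (v q))` of size `k`, where the `ℓ p` are
linear functionals on `V` and the `v q` lie in the submodule `K`. -/
noncomputable def minorIdeal {R V : Type*} [CommRing R] [AddCommGroup V] [Module R V]
    (K : Submodule R V) (k : ℕ) : Ideal R :=
  Ideal.span {r | ∃ (ℓ : Fin k → V →ₗ[R] R) (v : Fin k → V), (∀ q, v q ∈ K) ∧
    r = (Matrix.of fun p q => ℓ p (v q)).det}

theorem det_mem_minorIdeal {R V : Type*} [CommRing R] [AddCommGroup V] [Module R V]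
    {K : Submodule R V} {k : ℕ} (ℓ : Fin k → V →ₗ[R] R) (v : Fin k → V) (hv : ∀ q, v q ∈ K) :
    (Matrix.of fun p q => ℓ p (v q)).det ∈ minorIdeal K k :=
  Ideal.subset_span ⟨ℓ, v, hv, rfl⟩

theorem minorIdeal_zero {R V : Type*} [CommRing R] [AddCommGroup V] [Module R V]
    (K : Submodule R V) : minorIdeal K 0 = ⊤ := by
  rw [Ideal.eq_top_iff_one]
  simpa using det_mem_minorIdeal (K := K) (k := 0) (fun _ => 0) (fun _ => 0) (fun q => q.elim0)

theorem minorIdeal_mono {R V : Type*} [CommRing R] [AddCommGroup V] [Module R V]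
    {K K' : Submodule R V} (h : K ≤ K') (k : ℕ) : minorIdeal K k ≤ minorIdeal K' k :=
  Ideal.span_mono fun _ ⟨ℓ, v, hv, hr⟩ => ⟨ℓ, v, fun q => h (hv q), hr⟩

/-- Laplace expansion along the columns outside `K`. -/
theorem det_mem_minorIdeal_of_le_card {R V : Type*} [CommRing R] [AddCommGroup V] [Module R V]
    {K : Submodule R V} {k m : ℕ} (ℓ : Fin m → V →ₗ[R] R) (v : Fin m → V) (S : Finset (Fin m))
    (hS : ∀ q ∈ S, v q ∈ K) (hk : k ≤ S.card) :
    (Matrix.of fun p q => ℓ p (v q)).det ∈ minorIdeal K k := by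
  induction m with
  | zero =>
    have h0 : S.card = 0 := by simpa using Finset.card_le_univ S
    obtain rfl : k = 0 := by omega
    simp [minorIdeal_zero]
  | succ m ih =>
    by_cases hkm : k = m + 1
    · subst hkm
      have hu : S = Finset.univ := by
        rw [← Finset.card_eq_iff_eq_univ]
        exact le_antisymm (Finset.card_le_univ S) (by simpa using hk)
      exact det_mem_minorIdeal ℓ v fun q => hS q (hu ▸ Finset.mem_univ q)
    · obtain ⟨c, hc⟩ : ∃ c, k ≤ (S.erase c).card := by
        by_cases hu : S = Finset.univ
        · refine ⟨0, ?_⟩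
          rw [Finset.card_erase_of_mem (by simp [hu])]
          rw [hu] at hk ⊢
          simp at hk ⊢
          omega
        · obtain ⟨c, hc⟩ : ∃ c, c ∉ S := by simpa [Finset.eq_univ_iff_forall] using hu
          exact ⟨c, by rwa [Finset.erase_eq_of_notMem hc]⟩
      rw [Matrix.det_succ_column _ c]
      refine Ideal.sum_mem _ fun p _ => Ideal.mul_mem_left _ _ ?_
      refine ih (fun i => ℓ (p.succAbove i)) (fun i => v (c.succAbove i))
        (S.preimage c.succAbove (Fin.succAbove_right_injective.injOn)) (fun q hq => ?_) ?_
      · exact hS _ (by simpa using hq)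
      · refine hc.trans ?_
        rw [← Finset.card_map (Fin.succAboveEmb c)]
        refine Finset.card_le_card fun q hq => ?_
        obtain ⟨hqc, hqS⟩ := Finset.mem_erase.1 hq
        obtain ⟨i, rfl⟩ := Fin.exists_succAbove_eq hqc
        simpa using hqS

theorem minorIdeal_anti {R V : Type*} [CommRing R] [AddCommGroup V] [Module R V]
    (K : Submodule R V) {k k' : ℕ} (h : k ≤ k') : minorIdeal K k' ≤ minorIdeal K k := by
  refine Ideal.span_le.2 ?_
  rintro _ ⟨ℓ, v, hv, rfl⟩
  exact det_mem_minorIdeal_of_le_card ℓ v Finset.univ (fun q _ => hv q) (by simpa using h)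

theorem minorIdeal_le_of_map_le {R V W : Type*} [CommRing R] [AddCommGroup V] [Module R V]
    [AddCommGroup W] [Module R W] (e : V ≃ₗ[R] W) {K : Submodule R V} {K' : Submodule R W}
    (h : ∀ x ∈ K, e x ∈ K') (k : ℕ) : minorIdeal K k ≤ minorIdeal K' k := by
  refine Ideal.span_le.2 ?_
  rintro _ ⟨ℓ, v, hv, rfl⟩
  simpa using det_mem_minorIdeal (fun p => (ℓ p).comp e.symm.toLinearMap) (fun q => e (v q))
    fun q => h _ (hv q)

theorem minorIdeal_congr {R V W : Type*} [CommRing R] [AddCommGroup V] [Module R V]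
    [AddCommGroup W] [Module R W] (e : V ≃ₗ[R] W) {K : Submodule R V} {K' : Submodule R W}
    (h : ∀ x, x ∈ K ↔ e x ∈ K') (k : ℕ) : minorIdeal K k = minorIdeal K' k :=
  le_antisymm (minorIdeal_le_of_map_le e (fun x hx => (h x).1 hx) k)
    (minorIdeal_le_of_map_le e.symm (fun x hx => (h _).2 (by simpa using hx)) k)

/-- A minor whose first column is `(c, 0, …, 0)`. -/
theorem det_cons_column {R V : Type*} [CommRing R] [AddCommGroup V] [Module R V] {k : ℕ}
    (ℓ₀ : V →ₗ[R] R) (ℓ : Fin k → V →ₗ[R] R) (v₀ : V) (v : Fin k → V) (h : ∀ p, ℓ p v₀ = 0) :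
    (Matrix.of fun p q : Fin (k + 1) =>
      (Fin.cons ℓ₀ ℓ : Fin (k + 1) → V →ₗ[R] R) p ((Fin.cons v₀ v : Fin (k + 1) → V) q)).det =
      ℓ₀ v₀ * (Matrix.of fun p q => ℓ p (v q)).det := by
  rw [Matrix.det_succ_column_zero, Fin.sum_univ_succ, Finset.sum_eq_zero]
  · simp [Matrix.submatrix]
  · intro i _
    simp [h]

theorem minorIdeal_prod_top {R V : Type*} [CommRing R] [AddCommGroup V] [Module R V]
    (K : Submodule R V) (k : ℕ) :
    minorIdeal (K.comap (LinearMap.fst R V R)) (k + 1) = minorIdeal K k := by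
  refine le_antisymm (Ideal.span_le.2 ?_) (Ideal.span_le.2 ?_)
  · rintro _ ⟨ℓ, v, hv, rfl⟩
    have hv' : ∀ q, (v q).1 ∈ K := hv
    rw [← detFunctionals_apply]
    refine (detFunctionals v).map_mem_of_mem_span
      (fun _ => {LinearMap.snd R V R} ∪ Set.range fun f : V →ₗ[R] R => f.comp (LinearMap.fst R V R))
      _ (fun ℓ hℓ => ?_) ℓ (fun p => ?_)
    · rw [detFunctionals_apply]
      by_cases hex : ∃ p, ℓ p = LinearMap.snd R V R
      · obtain ⟨p, hp⟩ := hex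
        by_cases hex' : ∃ p', p' ≠ p ∧ ℓ p' = LinearMap.snd R V R
        · obtain ⟨p', hne, hp'⟩ := hex'
          rw [Matrix.det_zero_of_row_eq hne (by ext q; simp [hp, hp'])]
          exact Ideal.zero_mem _
        · push Not at hex'
          have : ∀ i, ∃ f : V →ₗ[R] R, f.comp (LinearMap.fst R V R) = ℓ (p.succAbove i) := by
            intro i
            rcases hℓ (p.succAbove i) with h | h
            · exact absurd h (hex' _ (Fin.succAbove_ne p i))
            · exact h
          choose f hf using this
          rw [Matrix.det_succ_row _ p]
          refine Ideal.sum_mem _ fun q _ => Ideal.mul_mem_left _ _ ?_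
          convert det_mem_minorIdeal f (fun i => (v (q.succAbove i)).1) (fun i => hv' _) using 2
          ext i l
          simp [← hf]
      · push Not at hex
        have : ∀ i, ∃ f : V →ₗ[R] R, f.comp (LinearMap.fst R V R) = ℓ i := by
          intro i
          rcases hℓ i with h | h
          · exact absurd h (hex _)
          · exact h
        choose f hf using this
        refine minorIdeal_anti K (Nat.le_succ k) ?_
        convert det_mem_minorIdeal f (fun i => (v i).1) (fun i => hv' _) using 2
        ext i l
        simp [← hf]
    · have : ℓ p = (ℓ p (0, 1)) • LinearMap.snd R V R +
          ((ℓ p).comp (LinearMap.inl R V R)).comp (LinearMap.fst R V R) := by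
        ext <;> simp [← Prod.zero_eq_mk]
      rw [this]
      exact Submodule.add_mem _
        (Submodule.smul_mem _ _ (Submodule.subset_span (Or.inl rfl)))
        (Submodule.subset_span (Or.inr ⟨_, rfl⟩))
  · rintro _ ⟨ℓ, v, hv, rfl⟩
    have := det_cons_column (LinearMap.snd R V R) (fun p => (ℓ p).comp (LinearMap.fst R V R))
      (0, 1) (fun q => (v q, 0)) (by simp)
    simp only [LinearMap.snd_apply, one_mul, LinearMap.comp_apply, LinearMap.fst_apply] at this
    rw [SetLike.mem_coe, ← this]
    refine det_mem_minorIdeal _ _ fun q => ?_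
    refine Fin.cases ?_ (fun q => ?_) q
    · simp
    · simpa using hv q

theorem minorIdeal_ker_coprod_smulRight {R V M : Type*} [CommRing R] [AddCommGroup V] [Module R V]
    [AddCommGroup M] [Module R M] (π : V →ₗ[R] M) (s : V) (ρ : R →ₗ[R] M) (hs : π s = ρ 1)
    (k : ℕ) :
    minorIdeal (LinearMap.ker (π.coprod ρ)) (k + 1) = minorIdeal (LinearMap.ker π) k := by
  rw [← minorIdeal_prod_top (LinearMap.ker π)]
  let e : (V × R) ≃ₗ[R] V × R := LinearEquiv.ofLinearMap
    ((LinearMap.fst R V R + (LinearMap.snd R V R).smulRight s).prod (LinearMap.snd R V R))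
    ((LinearMap.fst R V R - (LinearMap.snd R V R).smulRight s).prod (LinearMap.snd R V R))
    (by ext <;> simp) (by ext <;> simp)
  refine minorIdeal_congr e (fun x => ?_) _
  have h : ρ x.2 = x.2 • π s := by rw [hs, ← map_smul, smul_eq_mul, mul_one]
  simp [e, h]

theorem minorIdeal_ker_coprod {R V M : Type*} [CommRing R] [AddCommGroup V] [Module R V]
    [AddCommGroup M] [Module R M] (π : V →ₗ[R] M) (hπ : Function.Surjective π) (n m j : ℕ)
    (ρ : (Fin m → R) →ₗ[R] M) :
    minorIdeal (LinearMap.ker (π.coprod ρ)) (n + m - j) =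
      minorIdeal (LinearMap.ker π) (n - j) := by
  induction m with
  | zero =>
    let e : (V × (Fin 0 → R)) ≃ₗ[R] V := LinearEquiv.prodUnique
    refine minorIdeal_congr e (fun x => ?_) _
    have : x.2 = 0 := Subsingleton.elim _ _
    simp only [LinearMap.mem_ker, LinearMap.coprod_apply, this, map_zero, add_zero]
    rfl
  | succ m ih =>
    let c : (R × (Fin m → R)) ≃ₗ[R] (Fin (m + 1) → R) := Fin.consLinearEquiv R fun _ => R
    let ρ₁ : R →ₗ[R] M := ρ.comp (c.toLinearMap.comp (LinearMap.inl R _ _))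
    let ρ₂ : (Fin m → R) →ₗ[R] M := ρ.comp (c.toLinearMap.comp (LinearMap.inr R _ _))
    have hc : minorIdeal (LinearMap.ker (π.coprod ρ)) (n + (m + 1) - j) =
        minorIdeal (LinearMap.ker ((π.coprod ρ₂).coprod ρ₁)) (n + (m + 1) - j) := by
      let e : ((V × (Fin m → R)) × R) ≃ₗ[R] V × (Fin (m + 1) → R) :=
        (LinearEquiv.prodAssoc R V (Fin m → R) R).trans
          ((LinearEquiv.refl R V).prodCongr ((LinearEquiv.prodComm R _ _).trans c))
      refine (minorIdeal_congr e (fun x => ?_) _).symm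
      have : ρ (c (x.2, x.1.2)) = ρ₂ x.1.2 + ρ₁ x.2 := by
        simp only [ρ₁, ρ₂, LinearMap.comp_apply, ← map_add]
        simp
      simp [e, this, add_assoc]
    rw [hc, ← ih ρ₂]
    by_cases hj : j ≤ n + m
    · obtain ⟨s, hs⟩ := hπ (ρ₁ 1)
      rw [show n + (m + 1) - j = (n + m - j) + 1 by omega]
      exact minorIdeal_ker_coprod_smulRight _ (s, 0) _ (by simpa using hs) _
    · rw [show n + (m + 1) - j = 0 by omega, show n + m - j = 0 by omega, minorIdeal_zero,
        minorIdeal_zero]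

theorem minorIdeal_ker_eq_of_surjective {R M : Type*} [CommRing R] [AddCommGroup M] [Module R M]
    {n m : ℕ} (π : (Fin n → R) →ₗ[R] M) (hπ : Function.Surjective π)
    (ρ : (Fin m → R) →ₗ[R] M) (hρ : Function.Surjective ρ) (j : ℕ) :
    minorIdeal (LinearMap.ker π) (n - j) = minorIdeal (LinearMap.ker ρ) (m - j) := by
  rw [← minorIdeal_ker_coprod π hπ n m j ρ, ← minorIdeal_ker_coprod ρ hρ m n j π, add_comm m n]
  exact minorIdeal_congr (LinearEquiv.prodComm R _ _) (fun x => by simp [add_comm]) _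

/-- On `R^n` it suffices to consider minors, i.e. coordinate functionals. -/
theorem minorIdeal_le_iff {R : Type*} [CommRing R] {n : ℕ} {K : Submodule R (Fin n → R)} {k : ℕ}
    {J : Ideal R} :
    minorIdeal K k ≤ J ↔ ∀ v : Fin k → Fin n → R, (∀ q, v q ∈ K) → ∀ rows : Fin k → Fin n,
      (Matrix.of fun p q => v q (rows p)).det ∈ J := by
  refine ⟨fun h v hv rows => h (det_mem_minorIdeal (fun p => LinearMap.proj (rows p)) v hv),
    fun h => Ideal.span_le.2 ?_⟩
  rintro _ ⟨ℓ, v, hv, rfl⟩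
  rw [← detFunctionals_apply]
  refine (detFunctionals v).map_mem_of_mem_span
    (fun _ => Set.range fun i : Fin n => (LinearMap.proj i : (Fin n → R) →ₗ[R] R))
    _ (fun ℓ hℓ => ?_) ℓ (fun p => ?_)
  · choose rows hrows using hℓ
    rw [detFunctionals_apply]
    convert h v hv rows using 2
    ext p q
    simp [← hrows]
  · have : ℓ p = ∑ i, ℓ p (Pi.single i 1) • (LinearMap.proj i : (Fin n → R) →ₗ[R] R) := by
      ext i
      simp [Pi.single_apply]
    rw [this]
    exact Submodule.sum_mem _ fun i _ =>
      Submodule.smul_mem _ _ (Submodule.subset_span ⟨i, rfl⟩)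

theorem fittingIdeal_eq_minorIdeal {R M : Type*} [CommRing R] [AddCommGroup M] [Module R M]
    {n : ℕ} (π : (Fin n → R) →ₗ[R] M) (hπ : Function.Surjective π) (j : ℕ) :
    fittingIdeal R M j = minorIdeal (LinearMap.ker π) (n - j) := by
  refine le_antisymm (Ideal.span_le.2 ?_) (minorIdeal_le_iff.2 fun v hv rows => ?_)
  · rintro _ ⟨m, ρ, hρ, v, hv, rows, rfl⟩
    rw [minorIdeal_ker_eq_of_surjective π hπ ρ hρ]
    exact minorIdeal_le_iff.1 le_rfl v hv rows
  · exact Ideal.subset_span ⟨n, π, hπ, v, hv, rows, rfl⟩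

theorem mul_minorIdeal_le {R : Type*} [CommRing R] {n : ℕ} {K : Submodule R (Fin n → R)}
    {a : Ideal R} (ha : a • (⊤ : Submodule R (Fin n → R)) ≤ K) {k : ℕ} (hk : k < n) :
    a * minorIdeal K k ≤ minorIdeal K (k + 1) := by
  refine Ideal.mul_le.2 fun c hc r hr => ?_
  suffices h : minorIdeal K k ≤
      Submodule.comap (LinearMap.mulLeft R c) (minorIdeal K (k + 1)) from h hr
  refine minorIdeal_le_iff.2 fun v hv rows => ?_
  obtain ⟨i, hi⟩ : ∃ i, ∀ p, rows p ≠ i := by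
    by_contra! h
    have := Fintype.card_le_of_surjective rows h
    simp at this
    omega
  have := det_cons_column (LinearMap.proj i) (fun p => LinearMap.proj (R := R) (rows p))
    (c • Pi.single i 1) v (fun p => by simp [hi p])
  simp only [LinearMap.proj_apply, Pi.smul_apply, Pi.single_eq_same, smul_eq_mul, mul_one] at this
  rw [Submodule.mem_comap, LinearMap.mulLeft_apply, ← this]
  refine det_mem_minorIdeal _ _ fun q => ?_
  refine Fin.cases ?_ (fun q => ?_) q
  · exact ha (Submodule.smul_mem_smul hc trivial)
  · exact hv q

theorem pow_mul_minorIdeal_le {R : Type*} [CommRing R] {n : ℕ} {K : Submodule R (Fin n → R)}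
    {a : Ideal R} (ha : a • (⊤ : Submodule R (Fin n → R)) ≤ K) {j : ℕ} (hj : j ≤ n) :
    a ^ j * minorIdeal K (n - j) ≤ minorIdeal K n := by
  induction j with
  | zero => simp
  | succ j ih =>
    rw [pow_succ, mul_assoc]
    refine (Ideal.mul_mono_right ?_).trans (ih (by omega))
    rw [show n - j = n - (j + 1) + 1 by omega]
    exact mul_minorIdeal_le ha (by omega)

theorem minorIdeal_sup_smul_top {R : Type*} [CommRing R] {n : ℕ} (K : Submodule R (Fin n → R))
    (a : Ideal R) :
    minorIdeal (K ⊔ a • (⊤ : Submodule R (Fin n → R))) n =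
      ∑ j ∈ Finset.range (n + 1), a ^ j * minorIdeal K (n - j) := by
  classical
  rw [Ideal.sum_eq_sup]
  refine le_antisymm (Ideal.span_le.2 ?_) (Finset.sup_le fun j hj => ?_)
  · rintro _ ⟨ℓ, v, hv, rfl⟩
    rw [← detVectors_apply]
    refine (detVectors ℓ).map_mem_of_mem_span
      (fun _ => (K : Set (Fin n → R)) ∪ {x | ∃ c ∈ a, ∃ w, c • w = x}) _
      (fun v hv => ?_) v (fun q => ?_)
    · rw [detVectors_apply]
      have : ∀ q, ∃ (c : R) (w : Fin n → R), c • w = v q ∧ (v q ∈ K → w ∈ K ∧ c = 1) ∧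
          (v q ∉ K → c ∈ a) := by
        intro q
        by_cases hq : v q ∈ K
        · exact ⟨1, v q, by simp, fun _ => ⟨hq, rfl⟩, fun h => absurd hq h⟩
        · rcases hv q with h | ⟨c, hc, w, hw⟩
          · exact absurd h hq
          · exact ⟨c, w, hw, fun h => absurd h hq, fun _ => hc⟩
      choose c w hcw hK ha using this
      have hdet : (Matrix.of fun p q => ℓ p (v q)).det =
          (∏ q, c q) * (Matrix.of fun p q => ℓ p (w q)).det := by
        rw [← Matrix.det_mul_row]
        congr 1
        ext p q
        simp [← hcw]
      have hcard := Finset.card_filter_add_card_filter_not (s := Finset.univ) (fun q => v q ∈ K)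
      simp only [Finset.card_univ, Fintype.card_fin] at hcard
      set j := (Finset.univ.filter fun q => ¬ v q ∈ K).card with hj
      refine (Finset.le_sup (f := fun j => a ^ j * minorIdeal K (n - j))
        (Finset.mem_range.2 (by omega : j < n + 1))) ?_
      rw [hdet]
      refine Ideal.mul_mem_mul ?_ (det_mem_minorIdeal_of_le_card ℓ w
        (Finset.univ.filter fun q => v q ∈ K) (fun q hq => (hK q (by simpa using hq)).1)
        (by omega))
      rw [← Finset.prod_filter_mul_prod_filter_not Finset.univ (fun q => v q ∈ K),
        Finset.prod_eq_one (fun q hq => (hK q (by simpa using hq)).2), one_mul, hj,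
        ← Finset.prod_const]
      exact Ideal.prod_mem_prod fun q hq => ha q (by simpa using hq)
    · refine (sup_le ?_ ?_ : K ⊔ a • (⊤ : Submodule R (Fin n → R)) ≤ _) (hv q)
      · exact fun x hx => Submodule.subset_span (Or.inl hx)
      · exact Submodule.smul_le.2 fun c hc w _ => Submodule.subset_span (Or.inr ⟨c, hc, w, rfl⟩)
  · exact (Ideal.mul_mono_right (minorIdeal_mono le_sup_left _)).trans
      (pow_mul_minorIdeal_le le_sup_right (Nat.lt_succ_iff.1 (Finset.mem_range.1 hj)))

theorem ker_mkQ_smul_top_comp {R V M : Type*} [CommRing R] [AddCommGroup V] [Module R V]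
    [AddCommGroup M] [Module R M] (a : Ideal R) (π : V →ₗ[R] M) (hπ : Function.Surjective π) :
    LinearMap.ker ((Submodule.mkQ (a • (⊤ : Submodule R M))).comp π) =
      LinearMap.ker π ⊔ a • (⊤ : Submodule R V) := by
  rw [LinearMap.ker_comp, Submodule.ker_mkQ, sup_comm, ← Submodule.comap_map_eq,
    Submodule.map_smul'', Submodule.map_top, LinearMap.range_eq_top.2 hπ]

theorem span_smul_top_eq_span_single {R : Type*} [CommRing R] {ι κ : Type*} [Finite κ]
    [DecidableEq κ] (g : ι → R) :
    Ideal.span (Set.range g) • (⊤ : Submodule R (κ → R)) =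
      Submodule.span R (Set.range fun x : ι × κ => fun i => if i = x.2 then g x.1 else 0) := by
  cases nonempty_fintype κ
  rw [← (Pi.basisFun R κ).span_eq, Ideal.span, Submodule.span_smul_span]
  congr 1
  ext x
  simp only [Set.mem_smul, Set.mem_range, exists_exists_eq_and, Prod.exists]
  have h : ∀ (l : ι) (k : κ), g l • (Pi.basisFun R κ) k = fun i => if i = k then g l else 0 := by
    intro l k
    ext i
    simp [Pi.single_apply]
  simp only [h]

/-- Let `R` be a commutative ring, `a = (g₁, …, g_t)` a finitely
generated ideal, and `L` a finitely generated `R`-module with presentation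
`R^{β₁} → R^{β₀} → L → 0` given by the matrix `φ`.  Then the block matrix
`(φ | g₁·I_{β₀} | … | g_t·I_{β₀})` is a presentation matrix of `L/aL` as an `R`-module,
and `Fitt₀(L/aL) = Σ_{j=0}^{β₀} a^j · Fitt_j(L)`. -/
theorem stmt19 (R : Type*) [CommRing R] (t : ℕ) (g : Fin t → R)
    (a : Ideal R) (ha : a = Ideal.span (Set.range g))
    (β₀ β₁ : ℕ) (L : Type*) [AddCommGroup L] [Module R L] [Module.Finite R L]
    (φ : Matrix (Fin β₀) (Fin β₁) R)
    (π : (Fin β₀ → R) →ₗ[R] L) (hπ : Function.Surjective π)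
    (hker : LinearMap.ker π = LinearMap.range (Matrix.toLin' φ)) :
    LinearMap.ker ((Submodule.mkQ (a • (⊤ : Submodule R L))).comp π) =
      LinearMap.range (Matrix.toLin'
        (Matrix.of fun (i : Fin β₀) (c : Fin β₁ ⊕ Fin t × Fin β₀) =>
          match c with
          | Sum.inl j => φ i j
          | Sum.inr (l, kk) => if i = kk then g l else 0)) ∧
    fittingIdeal R (L ⧸ (a • (⊤ : Submodule R L))) 0 =
      ∑ j ∈ Finset.range (β₀ + 1), a ^ j * fittingIdeal R L j := by
  have hK := ker_mkQ_smul_top_comp a π hπ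
  refine ⟨?_, ?_⟩
  · rw [hK, hker, ha, span_smul_top_eq_span_single, Matrix.range_toLin', Matrix.range_toLin',
      ← Submodule.span_union, ← Set.Sum.elim_range]
    congr 2
    ext (c | c) i <;> rfl
  · have hs : Function.Surjective ((Submodule.mkQ (a • (⊤ : Submodule R L))).comp π) :=
      (Submodule.mkQ_surjective _).comp hπ
    rw [fittingIdeal_eq_minorIdeal _ hs, hK, Nat.sub_zero, minorIdeal_sup_smul_top]
    simp only [fittingIdeal_eq_minorIdeal π hπ]
end
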